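/- The quadruple integral ∫₀^∞∫₀^∞∫₀^∞∫₀^∞ [x₁x₂x₃x₄·((1 + x₁+x₂+x₃+x₄)(1 + 1/x₁+1/x₂+1/x₃+1/x₄) − 1)]^{-1} dx₁ dx₂ dx₃ dx₄ equals (4/3)·∫₀^π∫₀^π∫₀^π∫₀^π (4 − cos φ₁ − cos φ₂ − cos φ₃ − cos φ₄)^{-1} dφ₁ dφ₂ dφ₃ dφ₄. -/

import Mathlib

open Real MeasureTheory Set

/-- Modified Bessel function `I₀(t) = (1/π)∫₀^π exp(t cos θ) dθ`. -/
noncomputable def I0 (t : ℝ) : ℝ := (1 / π) * ∫ θ in (0:ℝ)..π, exp (t * cos θ)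

/-- Modified Bessel function `K₀(t) = ∫₀^∞ exp(−t cosh u) du`. -/
noncomputable def K0 (t : ℝ) : ℝ := ∫ u in Ioi (0:ℝ), exp (-(t * Real.cosh u))

/-- Rising factorial `(a)ₙ = a(a+1)⋯(a+n−1)`. -/
noncomputable def ris (a : ℝ) (n : ℕ) : ℝ := ∏ k ∈ Finset.range n, (a + k)

/-- Generalized hypergeometric series `ₚF_q(a; b | x)`. -/
noncomputable def pFq (a b : List ℝ) (x : ℝ) : ℝ :=
  ∑' n : ℕ, ((a.map fun p => ris p n).prod / (b.map fun q => ris q n).prod) * x ^ n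
    / (n.factorial : ℝ)

/-!
Write `λ` for the Källén function, which is minus sixteen times the squared area of the triangle
whose sides are the square roots of its arguments. After rescaling, the sunrise integral is an
average, with weights `1 / √(x (1 + x))` and twice `1 / √(x (x - 1))`, of bubble integrals, and the
dispersive form of the bubble makes it, up to a factor, the triple integral of `1 / √(-λ)` against
`S S C`. Here `S` is the Stieltjes transform of `1 / √(x (x - 1))` on `x > 1`, and its conjugate
transform `C` is `π / √(x (1 + x))`.

On a ray through the origin, `S S C + S C S + C S S - C C C` is the imaginary part of a product of
factors holomorphic in a common half-plane, so its integral along the ray vanishes. As `λ` is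
symmetric, three times the integral against `S S C` is therefore the integral of `1 / √(-λ)` against
`C C C`. Coincidences between periods of elliptic curves and the substitution
`(a, b, c) ↦ ((b - a) / c, (a + b) / c, 2 / c)` of triangle sides turn the latter into the triple
integral of `1 / √(-λ (x, y, w))` against `1 / √(x (1 - x))`, `1 / √(y (1 - y))` and `1 / √(4 - w)`.

This is Watson's integral: `cos p + cos q = 2 cos ((p - q) / 2) cos ((p + q) / 2)` applied to two
pairs of angles leaves two amplitudes `√x`, `√y` and two phases; the sum of the two waves is one
wave whose squared amplitude is proportional to `w`, and its phase is integrated out by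
`∫ dθ / (c - r cos θ) = 2 π / √(c² - r²)`.
-/

open scoped ENNReal
open Filter

namespace SunriseWatson

/-! ### Truncated reciprocals -/

/-- The reciprocal square root as an extended nonnegative real, equal to `0` off the positive axis.
The truncation lets a factor `rsqrt (p x)` carry the condition `0 < p x` inside an integrand. -/
noncomputable def rsqrt (t : ℝ) : ℝ≥0∞ := ENNReal.ofReal (√t)⁻¹

/-- The reciprocal as an extended nonnegative real, equal to `0` off the positive axis. -/
noncomputable def recip (t : ℝ) : ℝ≥0∞ := ENNReal.ofReal t⁻¹

@[fun_prop] lemma measurable_rsqrt : Measurable rsqrt := by unfold rsqrt; fun_prop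

@[fun_prop] lemma measurable_recip : Measurable recip := by unfold recip; fun_prop

lemma rsqrt_ne_top (t : ℝ) : rsqrt t ≠ ∞ := ENNReal.ofReal_ne_top

lemma recip_ne_top (t : ℝ) : recip t ≠ ∞ := ENNReal.ofReal_ne_top

lemma rsqrt_of_nonpos {t : ℝ} (ht : t ≤ 0) : rsqrt t = 0 := by
  simp [rsqrt, Real.sqrt_eq_zero_of_nonpos ht]

lemma rsqrt_le_rsqrt {s t : ℝ} (hs : 0 < s) (hst : s ≤ t) : rsqrt t ≤ rsqrt s := by
  unfold rsqrt
  gcongr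

lemma rsqrt_mul_of_nonneg_left {a : ℝ} (ha : 0 ≤ a) (b : ℝ) :
    rsqrt (a * b) = rsqrt a * rsqrt b := by
  unfold rsqrt
  rw [Real.sqrt_mul ha, mul_inv, ENNReal.ofReal_mul (by positivity)]

lemma rsqrt_mul_of_nonneg_right (a : ℝ) {b : ℝ} (hb : 0 ≤ b) :
    rsqrt (a * b) = rsqrt a * rsqrt b := by
  rw [mul_comm, rsqrt_mul_of_nonneg_left hb, mul_comm]

lemma rsqrt_mul_of_add_nonneg {a b : ℝ} (hab : 0 ≤ a + b) :
    rsqrt (a * b) = rsqrt a * rsqrt b := by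
  rcases le_total 0 a with ha | ha
  · exact rsqrt_mul_of_nonneg_left ha b
  · exact rsqrt_mul_of_nonneg_right a (by linarith)

lemma rsqrt_sq {a : ℝ} (ha : 0 ≤ a) : rsqrt (a ^ 2) = recip a := by
  unfold rsqrt recip
  rw [Real.sqrt_sq ha]

lemma rsqrt_mul_self {t : ℝ} (ht : 0 ≤ t) : rsqrt t * rsqrt t = recip t := by
  rw [← rsqrt_mul_of_nonneg_left ht, ← sq, rsqrt_sq ht]

lemma recip_mul {a : ℝ} (ha : 0 ≤ a) (b : ℝ) : recip (a * b) = recip a * recip b := by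
  unfold recip
  rw [mul_inv, ENNReal.ofReal_mul (by positivity)]

lemma ofReal_mul_recip {a : ℝ} (ha : 0 ≤ a) (b : ℝ) :
    ENNReal.ofReal a * recip b = ENNReal.ofReal (a / b) := by
  unfold recip
  rw [← ENNReal.ofReal_mul ha, div_eq_mul_inv]

lemma ofReal_mul_recip_self {a : ℝ} (ha : 0 < a) : ENNReal.ofReal a * recip a = 1 := by
  rw [ofReal_mul_recip ha.le, div_self ha.ne', ENNReal.ofReal_one]

lemma ofReal_mul_rsqrt_sq_mul {k : ℝ} (hk : 0 < k) (t : ℝ) :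
    ENNReal.ofReal k * rsqrt (k ^ 2 * t) = rsqrt t := by
  rw [rsqrt_mul_of_nonneg_left (by positivity), rsqrt_sq hk.le, ← mul_assoc,
    ofReal_mul_recip_self hk, one_mul]

/-! ### Supports, Tonelli and changes of variables -/

section Support

variable {α : Type*} [MeasurableSpace α] {μ : Measure α} {s t : Set α} {f : α → ℝ≥0∞}

lemma lintegral_eq_setLIntegral_of_forall_notMem (hf : ∀ x, x ∉ s → f x = 0) :
    ∫⁻ x, f x ∂μ = ∫⁻ x in s, f x ∂μ :=
  (setLIntegral_eq_of_support_subset fun x hx => by_contra fun hxs => hx (hf x hxs)).symm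

lemma setLIntegral_eq_of_subset_of_forall_notMem (hs : MeasurableSet s) (ht : MeasurableSet t)
    (hst : s ⊆ t) (hf : ∀ x ∈ t, x ∉ s → f x = 0) :
    ∫⁻ x in t, f x ∂μ = ∫⁻ x in s, f x ∂μ := by
  rw [← lintegral_inter_add_sdiff f t hs, inter_eq_right.mpr hst,
    setLIntegral_eq_zero (ht.diff hs) fun x hx => hf x hx.1 hx.2, add_zero]

end Support

section Tonelli

variable {α β γ : Type*} [MeasurableSpace α] [MeasurableSpace β] [MeasurableSpace γ]
  {μ : Measure α} {ν : Measure β} {τ : Measure γ}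

lemma measurable_lintegral_right [SFinite ν] {f : α → β → ℝ≥0∞}
    (hf : Measurable fun p : α × β => f p.1 p.2) : Measurable fun x => ∫⁻ y, f x y ∂ν :=
  hf.lintegral_prod_right'

lemma lintegral_lintegral_swap_of_measurable [SFinite μ] [SFinite ν] {f : α → β → ℝ≥0∞}
    (hf : Measurable fun p : α × β => f p.1 p.2) :
    ∫⁻ x, ∫⁻ y, f x y ∂ν ∂μ = ∫⁻ y, ∫⁻ x, f x y ∂μ ∂ν :=
  lintegral_lintegral_swap hf.aemeasurable

lemma lintegral_swap_inner [SFinite ν] [SFinite τ] {f : α → β → γ → ℝ≥0∞}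
    (hf : Measurable fun p : α × β × γ => f p.1 p.2.1 p.2.2) :
    ∫⁻ x, ∫⁻ y, ∫⁻ z, f x y z ∂τ ∂ν ∂μ = ∫⁻ x, ∫⁻ z, ∫⁻ y, f x y z ∂ν ∂τ ∂μ :=
  lintegral_congr fun x => lintegral_lintegral_swap_of_measurable <|
    hf.comp (by fun_prop : Measurable fun p : β × γ => (x, p.1, p.2))

lemma lintegral_swap_outer [SFinite μ] [SFinite ν] [SFinite τ] {f : α → β → γ → ℝ≥0∞}
    (hf : Measurable fun p : α × β × γ => f p.1 p.2.1 p.2.2) :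
    ∫⁻ x, ∫⁻ y, ∫⁻ z, f x y z ∂τ ∂ν ∂μ = ∫⁻ y, ∫⁻ x, ∫⁻ z, f x y z ∂τ ∂μ ∂ν :=
  lintegral_lintegral_swap_of_measurable <|
    measurable_lintegral_right (f := fun (p : α × β) z => f p.1 p.2 z) <|
      hf.comp (by fun_prop : Measurable fun p : (α × β) × γ => (p.1.1, p.1.2, p.2))

lemma lintegral_lintegral_add [SFinite ν] {f g : α → β → ℝ≥0∞}
    (hf : Measurable fun p : α × β => f p.1 p.2) :
    ∫⁻ x, ∫⁻ y, (f x y + g x y) ∂ν ∂μ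
      = (∫⁻ x, ∫⁻ y, f x y ∂ν ∂μ) + ∫⁻ x, ∫⁻ y, g x y ∂ν ∂μ := by
  rw [← lintegral_add_left (measurable_lintegral_right hf)]
  refine lintegral_congr fun x => lintegral_add_left ?_ _
  exact hf.comp measurable_prodMk_left

lemma lintegral_lintegral_lintegral_add [SFinite ν] [SFinite τ] {f g : α → β → γ → ℝ≥0∞}
    (hf : Measurable fun p : α × β × γ => f p.1 p.2.1 p.2.2) :
    ∫⁻ x, ∫⁻ y, ∫⁻ z, (f x y z + g x y z) ∂τ ∂ν ∂μ
      = (∫⁻ x, ∫⁻ y, ∫⁻ z, f x y z ∂τ ∂ν ∂μ) + ∫⁻ x, ∫⁻ y, ∫⁻ z, g x y z ∂τ ∂ν ∂μ := by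
  have hf' : Measurable fun p : (α × β) × γ => f p.1.1 p.1.2 p.2 :=
    hf.comp (by fun_prop : Measurable fun p : (α × β) × γ => (p.1.1, p.1.2, p.2))
  rw [← lintegral_lintegral_add
    (measurable_lintegral_right (f := fun (p : α × β) z => f p.1 p.2 z) hf')]
  refine lintegral_congr fun x => lintegral_congr fun y => lintegral_add_left ?_ _
  exact hf'.comp (measurable_prodMk_left (x := (x, y)))

lemma lintegral_mul_lintegral_mul_lintegral {f : α → ℝ≥0∞} {g : β → ℝ≥0∞} {h : γ → ℝ≥0∞}
    (hf : Measurable f) (hg : Measurable g) (hh : Measurable h) :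
    (∫⁻ x, f x ∂μ) * (∫⁻ y, g y ∂ν) * (∫⁻ z, h z ∂τ)
      = ∫⁻ x, ∫⁻ y, ∫⁻ z, f x * g y * h z ∂τ ∂ν ∂μ := by
  simp_rw [lintegral_const_mul _ hh, lintegral_mul_const _ (hg.const_mul _),
    lintegral_const_mul _ hg, lintegral_mul_const _ (hf.mul_const _), lintegral_mul_const _ hf]

end Tonelli

lemma setLIntegral_eq_of_invOn {s t : Set ℝ} (hs : MeasurableSet s) {g g' k : ℝ → ℝ}
    (hg : ∀ x ∈ s, HasDerivAt g (g' x) x) (hgs : MapsTo g s t) (hkt : MapsTo k t s)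
    (hinv : InvOn k g s t) (f : ℝ → ℝ≥0∞) :
    ∫⁻ y in t, f y = ∫⁻ x in s, ENNReal.ofReal |g' x| * f (g x) := by
  have hbij : BijOn g s t := hinv.bijOn hgs hkt
  rw [← hbij.image_eq]
  exact lintegral_image_eq_lintegral_abs_deriv_mul hs
    (fun x hx => (hg x hx).hasDerivWithinAt) hbij.injOn f

lemma setLIntegral_Ioi_eq_of_deriv_pos {g g' : ℝ → ℝ}
    (hg : ∀ x, 0 ≤ x → HasDerivAt g (g' x) x) (hg0 : g 0 = 0) (hg' : ∀ x, 0 < x → 0 < g' x)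
    (htop : Tendsto g atTop atTop) (f : ℝ → ℝ≥0∞) :
    ∫⁻ y in Ioi 0, f y = ∫⁻ x in Ioi 0, ENNReal.ofReal (g' x) * f (g x) := by
  have hcont : ContinuousOn g (Ici 0) := fun x hx => (hg x hx).continuousAt.continuousWithinAt
  have hmono : StrictMonoOn g (Ici 0) := by
    refine strictMonoOn_of_deriv_pos (convex_Ici 0) hcont fun x hx => ?_
    rw [interior_Ici] at hx
    rw [(hg x hx.le).deriv]
    exact hg' x hx
  have himage : g '' Ioi 0 = Ioi 0 := by
    refine Subset.antisymm ?_ fun y (hy : 0 < y) => ?_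
    · rintro _ ⟨x, hx, rfl⟩
      simpa [hg0] using hmono self_mem_Ici (mem_Ici.mpr (le_of_lt hx)) hx
    · obtain ⟨b, hyb, hb⟩ := ((htop.eventually_ge_atTop y).and (eventually_ge_atTop 0)).exists
      obtain ⟨x, hx, rfl⟩ := intermediate_value_Icc hb (hcont.mono Icc_subset_Ici_self)
        ⟨by simpa [hg0] using hy.le, hyb⟩
      refine ⟨x, hx.1.lt_of_ne' ?_, rfl⟩
      rintro rfl
      exact hy.ne' hg0
  rw [← lintegral_image_eq_lintegral_deriv_mul_of_monotoneOn measurableSet_Ioi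
    (fun x hx => (hg x (le_of_lt hx)).hasDerivWithinAt)
    (hmono.monotoneOn.mono Ioi_subset_Ici_self), himage]

lemma setLIntegral_Ioi_comp_sq (f : ℝ → ℝ≥0∞) :
    ∫⁻ y in Ioi 0, f y = ∫⁻ x in Ioi 0, ENNReal.ofReal (2 * x) * f (x ^ 2) :=
  setLIntegral_Ioi_eq_of_deriv_pos (g := fun x => x ^ 2)
    (fun x _ => by simpa using hasDerivAt_pow 2 x) (by simp) (fun x hx => by positivity)
    (tendsto_pow_atTop two_ne_zero) f

lemma setLIntegral_comp_mobius {a b c d : ℝ} (hdet : b * c - a * d ≠ 0) {s t : Set ℝ}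
    (hs : MeasurableSet s)
    (hst : ∀ x ∈ s, c + d * x ≠ 0 ∧ (a + b * x) / (c + d * x) ∈ t)
    (hts : ∀ y ∈ t, b - d * y ≠ 0 ∧ (c * y - a) / (b - d * y) ∈ s) (f : ℝ → ℝ≥0∞) :
    ∫⁻ y in t, f y = ∫⁻ x in s, ENNReal.ofReal (|b * c - a * d| / (c + d * x) ^ 2) *
      f ((a + b * x) / (c + d * x)) := by
  have hderiv : ∀ x ∈ s, HasDerivAt (fun x => (a + b * x) / (c + d * x))
      ((b * c - a * d) / (c + d * x) ^ 2) x := fun x hx => by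
    have hnum : HasDerivAt (fun x : ℝ => a + b * x) b x := by
      simpa using ((hasDerivAt_id x).const_mul b).const_add a
    have hden : HasDerivAt (fun x : ℝ => c + d * x) d x := by
      simpa using ((hasDerivAt_id x).const_mul d).const_add c
    exact (hnum.fun_div hden (hst x hx).1).congr_deriv (by ring)
  have hinv : InvOn (fun y => (c * y - a) / (b - d * y)) (fun x => (a + b * x) / (c + d * x)) s t :=
    ⟨fun x hx => by
      have h := (hst x hx).1
      have hden : b - d * ((a + b * x) / (c + d * x)) = (b * c - a * d) / (c + d * x) := by
        field_simp; ring
      have hnum : c * ((a + b * x) / (c + d * x)) - a = (b * c - a * d) * x / (c + d * x) := by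
        rw [eq_div_iff h, sub_mul, mul_assoc, div_mul_cancel₀ _ h]; ring
      simp only [hnum, hden, div_div_div_cancel_right₀ h, mul_div_cancel_left₀ _ hdet],
    fun y hy => by
      have h := (hts y hy).1
      have hden : c + d * ((c * y - a) / (b - d * y)) = (b * c - a * d) / (b - d * y) := by
        field_simp; ring
      have hnum : a + b * ((c * y - a) / (b - d * y)) = (b * c - a * d) * y / (b - d * y) := by
        rw [eq_div_iff h, add_mul, mul_assoc, div_mul_cancel₀ _ h]; ring
      simp only [hnum, hden, div_div_div_cancel_right₀ h, mul_div_cancel_left₀ _ hdet]⟩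
  rw [setLIntegral_eq_of_invOn hs hderiv (fun x hx => (hst x hx).2) (fun y hy => (hts y hy).2)
    hinv f]
  simp only [abs_div, abs_sq]

lemma lintegral_comp_affine {k : ℝ} (hk : k ≠ 0) (d : ℝ) (f : ℝ → ℝ≥0∞) :
    ∫⁻ y, f y = ENNReal.ofReal |k| * ∫⁻ x, f (k * x + d) := by
  have h := setLIntegral_comp_mobius (a := d) (b := k) (c := 1) (d := 0) (s := univ) (t := univ)
    (by simpa using hk) MeasurableSet.univ (by simp) (by simpa using hk) f
  simpa [add_comm d, lintegral_const_mul'] using h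

lemma setLIntegral_Ioi_comp_mul_left {k : ℝ} (hk : 0 < k) (f : ℝ → ℝ≥0∞) :
    ∫⁻ y in Ioi 0, f y = ENNReal.ofReal k * ∫⁻ x in Ioi 0, f (k * x) := by
  have h := setLIntegral_comp_mobius (a := 0) (b := k) (c := 1) (d := 0) (s := Ioi 0) (t := Ioi 0)
    (by simpa using hk.ne') measurableSet_Ioi
    (fun x (hx : 0 < x) => by simpa using mul_pos hk hx)
    (fun y (hy : 0 < y) => by simpa using ⟨hk.ne', div_pos hy hk⟩) f
  simpa [lintegral_const_mul', abs_of_pos hk] using h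

lemma setLIntegral_Ioo_comp_mobius {p q : ℝ} (hpq : p < q) (f : ℝ → ℝ≥0∞) :
    ∫⁻ x in Ioo p q, f x
      = ∫⁻ t in Ioi 0, ENNReal.ofReal ((q - p) / (1 + t) ^ 2) * f ((p + q * t) / (1 + t)) := by
  have hmaps : ∀ t ∈ Ioi (0 : ℝ), 1 + 1 * t ≠ 0 ∧ (p + q * t) / (1 + 1 * t) ∈ Ioo p q :=
    fun t (ht : 0 < t) => by
      refine ⟨by positivity, ?_, ?_⟩
      · rw [lt_div_iff₀ (by positivity)]; nlinarith
      · rw [div_lt_iff₀ (by positivity)]; nlinarith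
  have hinv : ∀ x ∈ Ioo p q, q - 1 * x ≠ 0 ∧ (1 * x - p) / (q - 1 * x) ∈ Ioi (0 : ℝ) :=
    fun x hx => by
      simp only [one_mul]
      exact ⟨(sub_pos.mpr hx.2).ne', div_pos (sub_pos.mpr hx.1) (sub_pos.mpr hx.2)⟩
  rw [setLIntegral_comp_mobius (by linarith) measurableSet_Ioi hmaps hinv]
  simp only [mul_one, one_mul, abs_of_pos (sub_pos.mpr hpq)]

/-! ### Complete elliptic and arcsine integrals -/

/-- The complete elliptic integral `∫₀^∞ du / √(u (u + m) (u + n))`. -/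
noncomputable def ellipticPeriod (m n : ℝ) : ℝ≥0∞ :=
  ∫⁻ u in Ioi 0, rsqrt (u * (u + m) * (u + n))

lemma ellipticPeriod_comm (m n : ℝ) : ellipticPeriod m n = ellipticPeriod n m := by
  simp only [ellipticPeriod, mul_right_comm]

lemma setLIntegral_Ioi_rsqrt_cubic {b d : ℝ} (hb : 0 < b) (hd : 0 < d) (a c : ℝ) :
    ∫⁻ t in Ioi 0, rsqrt (t * (a + b * t) * (c + d * t)) = ellipticPeriod (a * d) (b * c) := by
  have hk : 0 < (b * d)⁻¹ := by positivity
  rw [setLIntegral_Ioi_comp_mul_left hk, ← lintegral_const_mul' _ _ ENNReal.ofReal_ne_top]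
  refine lintegral_congr fun u => ?_
  refine Eq.trans ?_ (ofReal_mul_rsqrt_sq_mul hk _)
  congr 2
  field_simp
  ring

lemma setLIntegral_Ioo_rsqrt_quartic {p q : ℝ} (hpq : p < q) (a₀ a₁ b₀ b₁ : ℝ)
    (ha : 0 < a₀ + a₁ * q) (hb : 0 < b₀ + b₁ * q) :
    ∫⁻ x in Ioo p q, rsqrt ((x - p) * (q - x) * (a₀ + a₁ * x) * (b₀ + b₁ * x))
      = ellipticPeriod ((a₀ + a₁ * p) * (b₀ + b₁ * q)) ((a₀ + a₁ * q) * (b₀ + b₁ * p)) := by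
  rw [setLIntegral_Ioo_comp_mobius hpq, ← setLIntegral_Ioi_rsqrt_cubic ha hb]
  refine setLIntegral_congr_fun measurableSet_Ioi fun t (ht : 0 < t) => ?_
  have hk : 0 < (q - p) / (1 + t) ^ 2 := div_pos (sub_pos.mpr hpq) (by positivity)
  refine Eq.trans ?_ (ofReal_mul_rsqrt_sq_mul hk _)
  congr 2
  field_simp
  ring

lemma setLIntegral_Ioi_rsqrt_cubic_shift (r a₀ b₀ : ℝ) {a₁ b₁ : ℝ} (ha : 0 < a₁) (hb : 0 < b₁) :
    ∫⁻ x in Ioi r, rsqrt ((x - r) * (a₀ + a₁ * x) * (b₀ + b₁ * x))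
      = ellipticPeriod ((a₀ + a₁ * r) * b₁) (a₁ * (b₀ + b₁ * r)) := by
  rw [setLIntegral_comp_mobius (a := r) (b := 1) (c := 1) (d := 0) (s := Ioi 0) (t := Ioi r)
    (by simp) measurableSet_Ioi (by simp) (by simp), ← setLIntegral_Ioi_rsqrt_cubic ha hb]
  refine lintegral_congr fun x => ?_
  simp only [zero_mul, add_zero, one_mul, mul_one, mul_zero, sub_zero, abs_one, one_pow, div_one,
    ENNReal.ofReal_one]
  congr 1
  ring

/-- The real points of the elliptic curve `y² = (x - p) (x - q) (x - r) (x - s)` form two circles,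
exchanged by a translation, so the invariant differential has the same period on both. -/
lemma setLIntegral_rsqrt_quartic_outer {p q r s : ℝ} (hpq : p < q) (hqr : q < r) (hrs : r < s) :
    ∫⁻ x in Iio p ∪ Ioi s, rsqrt ((x - p) * (x - q) * (x - r) * (x - s))
      = ∫⁻ x in Ioo q r, rsqrt ((x - p) * (x - q) * (x - r) * (x - s)) := by
  have hinner : ∫⁻ x in Ioo q r, rsqrt ((x - p) * (x - q) * (x - r) * (x - s))
      = ∫⁻ t in Ioi 0, rsqrt (t * (s - q + (q - p) * t) * (s - r + (r - p) * t)) := by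
    rw [setLIntegral_Ioi_rsqrt_cubic (by linarith) (by linarith), ellipticPeriod_comm]
    convert setLIntegral_Ioo_rsqrt_quartic hqr (-p) 1 s (-1) (by linarith) (by linarith) using 2
    · ext x; congr 1; ring
    · ring
    · ring
  have hdet : -p * 1 - s * -1 ≠ 0 := by linarith
  have hmaps : ∀ t ∈ Ioi (0 : ℝ) \ {1},
      1 + -1 * t ≠ 0 ∧ (s + -p * t) / (1 + -1 * t) ∈ Iio p ∪ Ioi s := by
    rintro t ⟨ht : 0 < t, ht1 : t ≠ 1⟩
    refine ⟨fun h => ht1 (by linarith), ?_⟩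
    rcases lt_or_gt_of_ne ht1 with h | h
    · right
      rw [mem_Ioi, lt_div_iff₀ (by linarith)]; nlinarith
    · left
      rw [mem_Iio, div_lt_iff_of_neg (by linarith)]; nlinarith
  have hinv : ∀ x ∈ Iio p ∪ Ioi s,
      -p - -1 * x ≠ 0 ∧ (1 * x - s) / (-p - -1 * x) ∈ Ioi (0 : ℝ) \ {1} := by
    rintro x (hx | hx) <;> simp only [mem_Iio, mem_Ioi] at hx
    · have hne : -p - -1 * x < 0 := by linarith
      refine ⟨hne.ne, div_pos_of_neg_of_neg (by linarith) hne, fun h => ?_⟩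
      linarith [(div_eq_one_iff_eq hne.ne).mp h]
    · have hne : 0 < -p - -1 * x := by linarith
      refine ⟨hne.ne', div_pos (by linarith) hne, fun h => ?_⟩
      linarith [(div_eq_one_iff_eq hne.ne').mp h]
  have hmeas : MeasurableSet (Ioi (0 : ℝ) \ {1}) :=
    measurableSet_Ioi.diff (measurableSet_singleton 1)
  rw [hinner, ← setLIntegral_congr (sdiff_null_ae_eq_self (s := Ioi (0 : ℝ)) (t := {1}) (by simp)),
    setLIntegral_comp_mobius hdet hmeas hmaps hinv]
  refine setLIntegral_congr_fun hmeas fun t ht => ?_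
  have hden := (hmaps t ht).1
  have hk : 0 < |(-p * 1 - s * -1)| / (1 + -1 * t) ^ 2 := by positivity
  refine Eq.trans ?_ (ofReal_mul_rsqrt_sq_mul hk _)
  rw [div_pow, sq_abs]
  congr 2
  have hform : 1 + -1 * t = 1 - t := by ring
  rw [hform] at hden ⊢
  field_simp
  ring

lemma setLIntegral_Ioi_rsqrt_mul_recip {a b : ℝ} (ha : 0 < a) (hb : 0 < b) :
    ∫⁻ t in Ioi 0, rsqrt t * recip (a + b * t) = ENNReal.ofReal π * rsqrt (a * b) := by
  have hsubst : ∀ u ∈ Ioi (0 : ℝ), ENNReal.ofReal (2 * (√(a / b) * u)) *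
      (rsqrt ((√(a / b) * u) ^ 2) * recip (a + b * (√(a / b) * u) ^ 2))
        = ENNReal.ofReal (2 / a) * ENNReal.ofReal ((1 + u ^ 2)⁻¹) := fun u (hu : 0 < u) => by
    rw [rsqrt_sq (by positivity), ← mul_assoc, ofReal_mul_recip (by positivity),
      ofReal_mul_recip (by positivity), ← ENNReal.ofReal_mul (by positivity), mul_pow,
      Real.sq_sqrt (by positivity)]
    congr 1
    field_simp
  have harctan : ∫⁻ u in Ioi (0 : ℝ), ENNReal.ofReal ((1 + u ^ 2)⁻¹) = ENNReal.ofReal (π / 2) := by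
    rw [← ofReal_integral_eq_lintegral_ofReal integrable_inv_one_add_sq.integrableOn
      (Eventually.of_forall fun x => by positivity), integral_Ioi_inv_one_add_sq, arctan_zero,
      sub_zero]
  rw [setLIntegral_Ioi_comp_sq, setLIntegral_Ioi_comp_mul_left (k := √(a / b)) (by positivity),
    setLIntegral_congr_fun measurableSet_Ioi hsubst,
    lintegral_const_mul' _ _ ENNReal.ofReal_ne_top, harctan, rsqrt,
    ← ENNReal.ofReal_mul (by positivity), ← ENNReal.ofReal_mul (by positivity),
    ← ENNReal.ofReal_mul (by positivity), Real.sqrt_div ha.le, Real.sqrt_mul ha.le]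
  congr 1
  field_simp
  rw [Real.sq_sqrt ha.le]

lemma setLIntegral_Ioo_rsqrt_mul_recip {p q : ℝ} (hpq : p < q) {a₀ a₁ : ℝ}
    (hp : 0 < a₀ + a₁ * p) (hq : 0 < a₀ + a₁ * q) :
    ∫⁻ x in Ioo p q, rsqrt ((x - p) * (q - x)) * recip (a₀ + a₁ * x)
      = ENNReal.ofReal π * rsqrt ((a₀ + a₁ * p) * (a₀ + a₁ * q)) := by
  rw [setLIntegral_Ioo_comp_mobius hpq, ← setLIntegral_Ioi_rsqrt_mul_recip hp hq]
  refine setLIntegral_congr_fun measurableSet_Ioi fun t (ht : 0 < t) => ?_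
  have hpq' : 0 < q - p := sub_pos.mpr hpq
  have hquad : ((p + q * t) / (1 + t) - p) * (q - (p + q * t) / (1 + t))
      = ((q - p) / (1 + t)) ^ 2 * t := by
    field_simp; ring
  have hlin : a₀ + a₁ * ((p + q * t) / (1 + t))
      = (1 + t)⁻¹ * (a₀ + a₁ * p + (a₀ + a₁ * q) * t) := by
    field_simp; ring
  have hjac : ENNReal.ofReal ((q - p) / (1 + t) ^ 2) * recip ((q - p) / (1 + t)) *
      recip ((1 + t)⁻¹) = 1 := by
    rw [ofReal_mul_recip (by positivity), ofReal_mul_recip (by positivity), ← ENNReal.ofReal_one]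
    congr 1
    field_simp
  calc _ = ENNReal.ofReal ((q - p) / (1 + t) ^ 2) * recip ((q - p) / (1 + t)) * recip ((1 + t)⁻¹) *
        (rsqrt t * recip (a₀ + a₁ * p + (a₀ + a₁ * q) * t)) := by
        simp only [hquad, hlin]
        rw [rsqrt_mul_of_nonneg_left (by positivity), rsqrt_sq (by positivity),
          recip_mul (by positivity)]
        ring
    _ = _ := by rw [hjac, one_mul]

lemma setLIntegral_Ioi_rsqrt_quartic {p q : ℝ} (hp : 0 < p) (hq : 0 < q) (hpq : p ≠ q)
    {a₀ a₁ b₀ b₁ : ℝ} (ha : ∀ x, 0 < x → 0 < a₀ + a₁ * x) (hb : ∀ x, 0 < x → 0 < b₀ + b₁ * x) :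
    ∫⁻ x in Ioi 0, rsqrt ((x - p) * (q - x) * (a₀ + a₁ * x) * (b₀ + b₁ * x))
      = ellipticPeriod ((a₀ + a₁ * p) * (b₀ + b₁ * q)) ((a₀ + a₁ * q) * (b₀ + b₁ * p)) := by
  wlog hlt : p < q generalizing p q
  · rw [ellipticPeriod_comm, ← this hq hp hpq.symm (hpq.lt_or_gt.resolve_left hlt)]
    refine lintegral_congr fun x => ?_
    congr 1
    ring
  rw [← setLIntegral_Ioo_rsqrt_quartic hlt _ _ _ _ (ha q hq) (hb q hq)]
  refine setLIntegral_eq_of_subset_of_forall_notMem measurableSet_Ioo measurableSet_Ioi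
    (fun x hx => hp.trans hx.1) fun x hx hx' => rsqrt_of_nonpos ?_
  have hquad : (x - p) * (q - x) ≤ 0 := by
    rcases le_or_gt x p with hxp | hxp
    · exact mul_nonpos_of_nonpos_of_nonneg (by linarith) (by linarith)
    · exact mul_nonpos_of_nonneg_of_nonpos (by linarith)
        (sub_nonpos.mpr (not_lt.mp fun h => hx' ⟨hxp, h⟩))
  exact mul_nonpos_of_nonpos_of_nonneg (mul_nonpos_of_nonpos_of_nonneg hquad (ha x hx).le)
    (hb x hx).le

/-! ### The Källén function and inverse square root weights -/

/-- The Källén triangle function `x² + y² + z² - 2xy - 2yz - 2zx`. -/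
noncomputable def kallen (x y z : ℝ) : ℝ :=
  x ^ 2 + y ^ 2 + z ^ 2 - 2 * x * y - 2 * y * z - 2 * x * z

@[fun_prop] lemma measurable_kallen {α : Type*} [MeasurableSpace α] {f g h : α → ℝ}
    (hf : Measurable f) (hg : Measurable g) (hh : Measurable h) :
    Measurable fun a => kallen (f a) (g a) (h a) := by
  unfold kallen; fun_prop

lemma kallen_comm (x y z : ℝ) : kallen x y z = kallen y x z := by
  unfold kallen; ring

lemma kallen_right_comm (x y z : ℝ) : kallen x y z = kallen x z y := by
  unfold kallen; ring

lemma kallen_sq_mul {a : ℝ} (ha : a + 1 ≠ 0) (ha' : a - 1 ≠ 0) (x z : ℝ) :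
    kallen x (a ^ 2 * x) z
      = (a ^ 2 - 1) ^ 2 * ((x - z / (a + 1) ^ 2) * (x - z / (a - 1) ^ 2)) := by
  have hfactor : a ^ 2 - 1 = (a - 1) * (a + 1) := by ring
  unfold kallen
  rw [hfactor]
  field_simp
  ring

/-- The weight `1 / √(x (1 - x))` on the unit interval, extended by `0`. -/
noncomputable def unitWeight (x : ℝ) : ℝ≥0∞ := rsqrt x * rsqrt (1 - x)

/-- The weight `1 / √(x (x - 1))` on the half-line `x > 1`, extended by `0`. -/
noncomputable def outerWeight (x : ℝ) : ℝ≥0∞ := rsqrt x * rsqrt (x - 1)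

/-- The weight `1 / √(x (1 + x))` on the half-line `x > 0`, extended by `0`. -/
noncomputable def posWeight (x : ℝ) : ℝ≥0∞ := rsqrt x * rsqrt (1 + x)

@[fun_prop] lemma measurable_unitWeight : Measurable unitWeight := by unfold unitWeight; fun_prop

@[fun_prop] lemma measurable_outerWeight : Measurable outerWeight := by unfold outerWeight; fun_prop

@[fun_prop] lemma measurable_posWeight : Measurable posWeight := by unfold posWeight; fun_prop

lemma unitWeight_of_notMem {x : ℝ} (hx : x ∉ Ioo 0 1) : unitWeight x = 0 := by
  rcases le_or_gt x 0 with h | h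
  · simp [unitWeight, rsqrt_of_nonpos h]
  · simp [unitWeight, rsqrt_of_nonpos (sub_nonpos.mpr (not_lt.mp fun h1 => hx ⟨h, h1⟩))]

lemma outerWeight_of_notMem {x : ℝ} (hx : x ∉ Ioi 1) : outerWeight x = 0 := by
  simp [outerWeight, rsqrt_of_nonpos (sub_nonpos.mpr (not_lt.mp hx))]

lemma posWeight_of_notMem {x : ℝ} (hx : x ∉ Ioi 0) : posWeight x = 0 := by
  simp [posWeight, rsqrt_of_nonpos (not_lt.mp hx)]

/-! ### Trading two half-line weights for a unit and an outer weight -/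

lemma lintegral_rsqrt_mul_rsqrt_eq_ratio {G : ℝ → ℝ → ℝ≥0∞}
    (hG : Measurable fun p : ℝ × ℝ => G p.1 p.2) :
    ∫⁻ x, ∫⁻ y, rsqrt x * rsqrt y * G x y
      = ∫⁻ q in Ioi 0, rsqrt q * ∫⁻ x in Ioi 0, G x (q * x) := by
  have hfiber : ∀ x ∈ Ioi (0 : ℝ),
      ∫⁻ y, rsqrt x * rsqrt y * G x y = ∫⁻ q in Ioi 0, rsqrt q * G x (q * x) := by
    intro x (hx : 0 < x)
    rw [lintegral_eq_setLIntegral_of_forall_notMem (s := Ioi 0)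
        (fun y hy => by simp [rsqrt_of_nonpos (not_lt.mp hy)]),
      setLIntegral_Ioi_comp_mul_left hx, ← lintegral_const_mul' _ _ ENNReal.ofReal_ne_top]
    refine lintegral_congr fun q => ?_
    calc ENNReal.ofReal x * (rsqrt x * rsqrt (x * q) * G x (x * q))
        = ENNReal.ofReal x * (rsqrt x * rsqrt x) * (rsqrt q * G x (q * x)) := by
          rw [rsqrt_mul_of_nonneg_left hx.le, mul_comm x q]; ring
      _ = rsqrt q * G x (q * x) := by
          rw [rsqrt_mul_self hx.le, ofReal_mul_recip_self hx, one_mul]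
  have : Measurable fun p : ℝ × ℝ => G p.1 (p.2 * p.1) :=
    hG.comp (by fun_prop : Measurable fun p : ℝ × ℝ => (p.1, p.2 * p.1))
  rw [lintegral_eq_setLIntegral_of_forall_notMem (s := Ioi 0)
      (fun x hx => by simp [rsqrt_of_nonpos (not_lt.mp hx)]),
    setLIntegral_congr_fun measurableSet_Ioi hfiber,
    lintegral_lintegral_swap_of_measurable (by fun_prop)]
  exact lintegral_congr fun q => lintegral_const_mul' _ _ (rsqrt_ne_top q)

/-- Along a ray `y = a² x` both sides are periods of isomorphic elliptic curves. -/
lemma setLIntegral_rsqrt_kallen_ray {V a : ℝ} (hV : 0 < V) (ha : 0 < a) (ha1 : a ≠ 1) :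
    ∫⁻ x in Ioi 0, rsqrt (1 + x) * rsqrt (1 + a ^ 2 * x) * rsqrt (-kallen x (a ^ 2 * x) V)
      = ∫⁻ x in Ioi 0,
          rsqrt ((1 - x) * (a ^ 2 * x - 1)) * rsqrt (kallen x (a ^ 2 * x) (-V)) := by
  have ha1' : a - 1 ≠ 0 := sub_ne_zero.mpr ha1
  have hfactor := kallen_sq_mul (by positivity) ha1'
  have hsq : 0 < (a ^ 2 - 1) ^ 2 := by
    rw [show a ^ 2 - 1 = (a - 1) * (a + 1) by ring]; positivity
  simp only [hfactor, neg_div, sub_neg_eq_add]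
  set c := (a ^ 2 - 1) ^ 2
  set m := V / (a + 1) ^ 2
  set M := V / (a - 1) ^ 2
  have hm : 0 < m := by positivity
  have hM : 0 < M := by positivity
  have hmM : m ≠ M := (div_lt_div_of_pos_left hV (by positivity) (by nlinarith)).ne
  have hinv : 1 ≠ 1 / a ^ 2 := fun h => ha1 <| by
    rwa [eq_div_iff (by positivity), one_mul, pow_eq_one_iff_of_nonneg ha.le two_ne_zero] at h
  have hleft := setLIntegral_Ioi_rsqrt_quartic hm hM hmM (a₀ := c) (a₁ := c) (b₀ := 1)
    (b₁ := a ^ 2) (fun x hx => by positivity) (fun x hx => by positivity)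
  have hright := setLIntegral_Ioi_rsqrt_quartic one_pos (by positivity) hinv (a₀ := a ^ 2 * c * m)
    (a₁ := a ^ 2 * c) (b₀ := M) (b₁ := 1) (fun x hx => by positivity) (fun x hx => by positivity)
  have hmodulus : (c + c * m) * (1 + a ^ 2 * M)
      = (a ^ 2 * c * m + a ^ 2 * c * 1) * (M + 1 * (1 / a ^ 2)) := by
    field_simp; ring
  have hmodulus' : (c + c * M) * (1 + a ^ 2 * m)
      = (a ^ 2 * c * m + a ^ 2 * c * (1 / a ^ 2)) * (M + 1 * 1) := by
    field_simp; ring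
  rw [hmodulus, hmodulus', ← hright] at hleft
  refine Eq.trans ?_ (hleft.trans ?_) <;>
    refine setLIntegral_congr_fun measurableSet_Ioi fun x (hx : 0 < x) => ?_
  · rw [← rsqrt_mul_of_nonneg_left (by positivity), ← rsqrt_mul_of_nonneg_left (by positivity)]
    congr 1
    ring
  · rw [← rsqrt_mul_of_nonneg_right _ (by positivity)]
    congr 1
    field_simp
    ring

lemma rsqrt_mul_eq_unitWeight_mul_outerWeight_add (x y : ℝ) :
    rsqrt x * rsqrt y * rsqrt ((1 - x) * (y - 1))
      = unitWeight x * outerWeight y + unitWeight y * outerWeight x := by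
  unfold unitWeight outerWeight
  rcases le_total x 1 with h | h
  · rw [rsqrt_mul_of_nonneg_left (by linarith), rsqrt_of_nonpos (t := x - 1) (by linarith)]
    ring
  · rw [show (1 - x) * (y - 1) = (x - 1) * (1 - y) by ring, rsqrt_mul_of_nonneg_left (by linarith),
      rsqrt_of_nonpos (t := 1 - x) (by linarith)]
    ring

lemma lintegral_posWeight_rsqrt_kallen {V : ℝ} (hV : 0 < V) :
    ∫⁻ x, ∫⁻ y, posWeight x * posWeight y * rsqrt (-kallen x y V)
      = 2 * ∫⁻ x, ∫⁻ y, unitWeight x * outerWeight y * rsqrt (kallen x y (-V)) := by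
  have hray : ∀ᵐ q ∂volume.restrict (Ioi (0 : ℝ)),
      ∫⁻ x in Ioi 0, rsqrt (1 + x) * rsqrt (1 + q * x) * rsqrt (-kallen x (q * x) V)
        = ∫⁻ x in Ioi 0, rsqrt ((1 - x) * (q * x - 1)) * rsqrt (kallen x (q * x) (-V)) := by
    have hne : ∀ᵐ q ∂volume.restrict (Ioi (0 : ℝ)), q ≠ 1 := ae_restrict_of_ae (by simp [ae_iff])
    filter_upwards [hne, ae_restrict_mem measurableSet_Ioi] with q hq1 (hq : 0 < q)
    have h := setLIntegral_rsqrt_kallen_ray hV (Real.sqrt_pos.mpr hq) (by simpa using hq1)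
    rwa [Real.sq_sqrt hq.le] at h
  calc ∫⁻ x, ∫⁻ y, posWeight x * posWeight y * rsqrt (-kallen x y V)
      = ∫⁻ x, ∫⁻ y, rsqrt x * rsqrt y *
          (rsqrt (1 + x) * rsqrt (1 + y) * rsqrt (-kallen x y V)) :=
        lintegral_congr fun x => lintegral_congr fun y => by unfold posWeight; ring
    _ = ∫⁻ x, ∫⁻ y, rsqrt x * rsqrt y *
          (rsqrt ((1 - x) * (y - 1)) * rsqrt (kallen x y (-V))) := by
        rw [lintegral_rsqrt_mul_rsqrt_eq_ratio (by fun_prop),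
          lintegral_rsqrt_mul_rsqrt_eq_ratio (by fun_prop)]
        refine lintegral_congr_ae ?_
        filter_upwards [hray] with q hq using by rw [hq]
    _ = ∫⁻ x, ∫⁻ y, (unitWeight x * outerWeight y * rsqrt (kallen x y (-V)) +
          unitWeight y * outerWeight x * rsqrt (kallen y x (-V))) :=
        lintegral_congr fun x => lintegral_congr fun y => by
          rw [← mul_assoc, rsqrt_mul_eq_unitWeight_mul_outerWeight_add, kallen_comm y x, add_mul]
    _ = 2 * ∫⁻ x, ∫⁻ y, unitWeight x * outerWeight y * rsqrt (kallen x y (-V)) := by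
        rw [lintegral_lintegral_add (by fun_prop), two_mul,
          lintegral_lintegral_swap_of_measurable
            (f := fun x y => unitWeight y * outerWeight x * rsqrt (kallen y x (-V))) (by fun_prop)]

/-! ### The mixed triple integral -/

/-- The indicator function of the positive half-line. -/
noncomputable def posIndicator (t : ℝ) : ℝ≥0∞ := (Ioi (0 : ℝ)).indicator 1 t

@[fun_prop] lemma measurable_posIndicator : Measurable posIndicator :=
  measurable_one.indicator measurableSet_Ioi

lemma posIndicator_of_pos {t : ℝ} (ht : 0 < t) : posIndicator t = 1 := by simp [posIndicator, ht]

lemma posIndicator_of_nonpos {t : ℝ} (ht : t ≤ 0) : posIndicator t = 0 := by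
  simp [posIndicator, ht]

lemma posIndicator_le_one (t : ℝ) : posIndicator t ≤ 1 := indicator_le_self' (by simp) t

lemma unitWeight_ne_top (x : ℝ) : unitWeight x ≠ ∞ :=
  ENNReal.mul_ne_top (rsqrt_ne_top _) (rsqrt_ne_top _)

lemma outerWeight_ne_top (x : ℝ) : outerWeight x ≠ ∞ :=
  ENNReal.mul_ne_top (rsqrt_ne_top _) (rsqrt_ne_top _)

lemma posWeight_ne_top (x : ℝ) : posWeight x ≠ ∞ :=
  ENNReal.mul_ne_top (rsqrt_ne_top _) (rsqrt_ne_top _)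

lemma posWeight_neg_mul_rsqrt {z : ℝ} (hz : z < 0) (k : ℝ) :
    posWeight (-z) * rsqrt k = rsqrt (z * (z - 1) * k) := by
  unfold posWeight
  rw [← rsqrt_mul_of_nonneg_left (by linarith), ← rsqrt_mul_of_nonneg_left (by nlinarith)]
  congr 1
  ring

lemma outerWeight_mul_rsqrt {z : ℝ} (hz : 1 < z) (k : ℝ) :
    outerWeight z * rsqrt k = rsqrt (z * (z - 1) * k) := by
  unfold outerWeight
  rw [← rsqrt_mul_of_nonneg_left (by linarith), ← rsqrt_mul_of_nonneg_left (by nlinarith)]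

lemma unitWeight_mul_rsqrt {z : ℝ} (hz : z ∈ Ioo 0 1) (k : ℝ) :
    unitWeight z * rsqrt k = rsqrt (z * (1 - z) * k) := by
  obtain ⟨hz0, hz1⟩ := hz
  unfold unitWeight
  rw [← rsqrt_mul_of_nonneg_left hz0.le, ← rsqrt_mul_of_nonneg_left (by nlinarith)]

lemma kallen_sq_sq (a b z : ℝ) :
    kallen (a ^ 2) (b ^ 2) z = (z - (b - a) ^ 2) * (z - (b + a) ^ 2) := by
  unfold kallen; ring

section Fiber

variable {a b : ℝ}

lemma lintegral_posWeight_neg_add_outerWeight_rsqrt_kallen (ha : 0 ≤ a) (hb : 1 < b) :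
    (∫⁻ z, posWeight (-z) * rsqrt (kallen (a ^ 2) (b ^ 2) z)) +
        ∫⁻ z, posIndicator (√z - a - b) * outerWeight z * rsqrt (kallen (a ^ 2) (b ^ 2) z)
      = ∫⁻ z in Iio 0 ∪ Ioi ((b + a) ^ 2),
          rsqrt (z * (z - 1) * kallen (a ^ 2) (b ^ 2) z) := by
  have hone : 1 < (b + a) ^ 2 := by nlinarith
  have hdisj : Disjoint (Iio 0) (Ioi ((b + a) ^ 2)) :=
    Set.disjoint_left.mpr fun z (hz : z < 0) (hz' : (b + a) ^ 2 < z) => by linarith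
  rw [lintegral_union measurableSet_Ioi hdisj]
  congr 1
  · rw [lintegral_eq_setLIntegral_of_forall_notMem (s := Iio 0) fun z hz => by
      rw [posWeight_of_notMem (by simpa using hz), zero_mul]]
    exact setLIntegral_congr_fun measurableSet_Iio fun z hz => posWeight_neg_mul_rsqrt hz _
  · rw [lintegral_eq_setLIntegral_of_forall_notMem (s := Ioi ((b + a) ^ 2)) fun z hz => by
      have hle : √z ≤ b + a := Real.sqrt_le_iff.mpr ⟨by positivity, not_lt.mp hz⟩
      rw [posIndicator_of_nonpos (by linarith), zero_mul, zero_mul]]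
    refine setLIntegral_congr_fun measurableSet_Ioi fun z (hz : (b + a) ^ 2 < z) => ?_
    have hlt : b + a < √z := (Real.lt_sqrt (by positivity)).mpr hz
    rw [posIndicator_of_pos (by linarith), one_mul, outerWeight_mul_rsqrt (hone.trans hz)]

lemma lintegral_unitWeight_rsqrt_neg_kallen (hab : (b - a) ^ 2 ≠ 0) (hone : 1 < (b + a) ^ 2) :
    ∫⁻ z, unitWeight z * rsqrt (-kallen (a ^ 2) (b ^ 2) z)
      = ∫⁻ z in Ioo ((b - a) ^ 2) 1, rsqrt (z * (z - 1) * kallen (a ^ 2) (b ^ 2) z) := by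
  have hpos : 0 < (b - a) ^ 2 := by positivity
  rw [lintegral_eq_setLIntegral_of_forall_notMem (s := Ioo ((b - a) ^ 2) 1)]
  · refine setLIntegral_congr_fun measurableSet_Ioo fun z hz => ?_
    rw [unitWeight_mul_rsqrt ⟨hpos.trans hz.1, hz.2⟩]
    congr 1
    ring
  · intro z hz
    by_cases hz1 : z ∈ Ioo 0 1
    · have hle : z ≤ (b - a) ^ 2 := not_lt.mp fun h => hz ⟨h, hz1.2⟩
      rw [rsqrt_of_nonpos, mul_zero]
      rw [kallen_sq_sq, neg_nonpos]
      exact mul_nonneg_of_nonpos_of_nonpos (by linarith) (by linarith [hz1.2])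
    · rw [unitWeight_of_notMem hz1, zero_mul]

lemma lintegral_outerWeight_rsqrt_kallen_of_lt (hab : a < b) :
    ∫⁻ z, posIndicator (b - a - √z) * outerWeight z * rsqrt (kallen (a ^ 2) (b ^ 2) z)
      = ∫⁻ z in Ioo 1 ((b - a) ^ 2), rsqrt (z * (z - 1) * kallen (a ^ 2) (b ^ 2) z) := by
  rw [lintegral_eq_setLIntegral_of_forall_notMem (s := Ioo 1 ((b - a) ^ 2))]
  · refine setLIntegral_congr_fun measurableSet_Ioo fun z hz => ?_
    have hlt : √z < b - a := (Real.sqrt_lt' (by linarith)).mpr hz.2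
    rw [posIndicator_of_pos (by linarith), one_mul, outerWeight_mul_rsqrt hz.1]
  · intro z hz
    by_cases hz1 : z ∈ Ioi 1
    · have hle : b - a ≤ √z := Real.le_sqrt_of_sq_le (not_lt.mp fun h => hz ⟨hz1, h⟩)
      rw [posIndicator_of_nonpos (by linarith), zero_mul, zero_mul]
    · rw [outerWeight_of_notMem hz1, mul_zero, zero_mul]

lemma lintegral_rsqrt_kallen_balance (ha : 0 < a) (ha1 : a < 1) (hb : 1 < b)
    (hab : (b - a) ^ 2 ≠ 1) :
    (∫⁻ z, posWeight (-z) * rsqrt (kallen (a ^ 2) (b ^ 2) z)) +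
        ∫⁻ z, posIndicator (√z - a - b) * outerWeight z * rsqrt (kallen (a ^ 2) (b ^ 2) z)
      = (∫⁻ z, unitWeight z * rsqrt (-kallen (a ^ 2) (b ^ 2) z)) +
        ∫⁻ z, posIndicator (b - a - √z) * outerWeight z * rsqrt (kallen (a ^ 2) (b ^ 2) z) := by
  have hpos : 0 < (b - a) ^ 2 := by nlinarith
  have hone : 1 < (b + a) ^ 2 := by nlinarith
  rw [lintegral_posWeight_neg_add_outerWeight_rsqrt_kallen ha.le hb,
    lintegral_unitWeight_rsqrt_neg_kallen hpos.ne' hone,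
    lintegral_outerWeight_rsqrt_kallen_of_lt (ha1.trans hb)]
  simp only [kallen_sq_sq, ← mul_assoc]
  rcases lt_or_gt_of_ne hab with hlt | hgt
  · have houter := setLIntegral_rsqrt_quartic_outer hpos hlt hone
    simp only [sub_zero, mul_right_comm _ (_ - (b - a) ^ 2) (_ - 1)] at houter
    rw [Ioo_eq_empty hlt.not_gt, setLIntegral_empty, add_zero, houter]
  · have houter := setLIntegral_rsqrt_quartic_outer one_pos hgt
      (show (b - a) ^ 2 < (b + a) ^ 2 by nlinarith)
    simp only [sub_zero] at houter
    rw [Ioo_eq_empty hgt.not_gt, setLIntegral_empty, zero_add, houter]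

lemma lintegral_outerWeight_rsqrt_kallen_le (ha : 0 < a) (ha1 : a < 1) (hb : 1 < b) :
    ∫⁻ z, posIndicator (√z - a - b) * outerWeight z * rsqrt (kallen (a ^ 2) (b ^ 2) z)
      ≤ ENNReal.ofReal π * rsqrt (2 * a) * rsqrt (b ^ 2) := by
  have hbase := setLIntegral_Ioi_rsqrt_mul_recip (a := 2 * a) (b := 1) (by positivity) one_pos
  rw [mul_one] at hbase
  rw [← hbase, mul_comm, ← lintegral_const_mul' _ _ (rsqrt_ne_top _),
    lintegral_comp_affine one_ne_zero ((b + a) ^ 2),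
    lintegral_eq_setLIntegral_of_forall_notMem (s := Ioi 0)]
  · simp only [abs_one, ENNReal.ofReal_one, one_mul]
    refine setLIntegral_mono' measurableSet_Ioi fun s (hs : 0 < s) => ?_
    have hpos : 0 < 2 * a + s := by positivity
    have hfactor : kallen (a ^ 2) (b ^ 2) (s + (b + a) ^ 2) = (s + 4 * (a * b)) * s := by
      rw [kallen_sq_sq]; ring
    have hfst : rsqrt (s + (b + a) ^ 2) ≤ rsqrt (b ^ 2) :=
      rsqrt_le_rsqrt (by positivity) (by nlinarith)
    have hsnd : rsqrt (s + (b + a) ^ 2 - 1) ≤ rsqrt (2 * a + s) :=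
      rsqrt_le_rsqrt hpos (by nlinarith)
    have hthd : rsqrt (s + 4 * (a * b)) ≤ rsqrt (2 * a + s) := rsqrt_le_rsqrt hpos (by nlinarith)
    rw [hfactor, rsqrt_mul_of_nonneg_right _ hs.le, ← rsqrt_mul_self hpos.le, outerWeight]
    calc _ ≤ 1 * (rsqrt (b ^ 2) * rsqrt (2 * a + s)) * (rsqrt (2 * a + s) * rsqrt s) := by
          gcongr
          exact posIndicator_le_one _
      _ = _ := by ring
  · intro z hz
    have hz0 : z ≤ 0 := not_lt.mp hz
    have hle : √(1 * z + (b + a) ^ 2) ≤ b + a :=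
      Real.sqrt_le_iff.mpr ⟨by positivity, by linarith⟩
    rw [posIndicator_of_nonpos (by linarith), zero_mul, zero_mul]

end Fiber

lemma lintegral_outerWeight_mul_rsqrt : ∫⁻ y, outerWeight y * rsqrt y = ENNReal.ofReal π := by
  have hbase := setLIntegral_Ioi_rsqrt_mul_recip (a := 1) (b := 1) one_pos one_pos
  rw [lintegral_comp_affine one_ne_zero 1, lintegral_eq_setLIntegral_of_forall_notMem (s := Ioi 0)]
  · simp only [abs_one, ENNReal.ofReal_one, one_mul]
    rw [mul_one, show rsqrt 1 = 1 by simp [rsqrt], mul_one] at hbase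
    rw [← hbase]
    refine setLIntegral_congr_fun measurableSet_Ioi fun s (hs : 0 < s) => ?_
    rw [outerWeight, add_sub_cancel_right, one_mul, add_comm 1 s, ← rsqrt_mul_self (by linarith)]
    ring
  · intro z hz
    rw [outerWeight_of_notMem (by simpa using hz), zero_mul]

lemma lintegral_unitWeight : ∫⁻ x, unitWeight x = ENNReal.ofReal π := by
  have harcsine := setLIntegral_Ioo_rsqrt_mul_recip one_pos (a₀ := 1) (a₁ := 0)
    (by norm_num) (by norm_num)
  simp only [zero_mul, add_zero, sub_zero, mul_one, recip, rsqrt, inv_one, sqrt_one,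
    ENNReal.ofReal_one] at harcsine
  rw [lintegral_eq_setLIntegral_of_forall_notMem fun x => unitWeight_of_notMem, ← harcsine]
  refine setLIntegral_congr_fun measurableSet_Ioo fun x hx => ?_
  exact (rsqrt_mul_of_nonneg_left hx.1.le _).symm

lemma lintegral_unitWeight_mul_rsqrt_sqrt_lt_top : ∫⁻ x, unitWeight x * rsqrt (2 * √x) < ∞ := by
  have hbound : ∀ u ∈ Ioi (0 : ℝ), ENNReal.ofReal (2 * u) *
      (unitWeight (u ^ 2) * rsqrt (2 * √(u ^ 2))) ≤ 2 * unitWeight u := fun u (hu : 0 < u) => by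
    rcases lt_or_ge u 1 with hu1 | hu1
    · have htwo : rsqrt (2 * u) ≤ rsqrt u := rsqrt_le_rsqrt hu (by linarith)
      have hsub : rsqrt (1 - u ^ 2) ≤ rsqrt (1 - u) := rsqrt_le_rsqrt (by linarith) (by nlinarith)
      calc _ = 2 * (ENNReal.ofReal u * recip u) * (rsqrt (2 * u) * rsqrt (1 - u ^ 2)) := by
            rw [Real.sqrt_sq hu.le, unitWeight, rsqrt_sq hu.le, ENNReal.ofReal_mul two_pos.le,
              ENNReal.ofReal_ofNat]
            ring
        _ ≤ 2 * unitWeight u := by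
            rw [ofReal_mul_recip_self hu, mul_one, unitWeight]
            gcongr
    · rw [unitWeight_of_notMem fun h => by nlinarith [h.2]]
      simp
  rw [lintegral_eq_setLIntegral_of_forall_notMem (s := Ioi 0), setLIntegral_Ioi_comp_sq]
  · calc _ ≤ ∫⁻ u in Ioi 0, 2 * unitWeight u := setLIntegral_mono' measurableSet_Ioi hbound
      _ ≤ 2 * ∫⁻ u, unitWeight u := by
          rw [lintegral_const_mul' _ _ ENNReal.ofNat_ne_top]
          gcongr
          exact Measure.restrict_le_self
      _ < ∞ := by
          rw [lintegral_unitWeight]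
          exact ENNReal.mul_lt_top ENNReal.ofNat_lt_top ENNReal.ofReal_lt_top
  · intro z hz
    rw [unitWeight_of_notMem fun h => hz h.1, zero_mul]

lemma lintegral_outerWeight_excess_lt_top :
    ∫⁻ x, ∫⁻ y, unitWeight x * outerWeight y *
      ∫⁻ z, posIndicator (√z - √x - √y) * outerWeight z * rsqrt (kallen x y z) < ∞ := by
  have hinner : ∀ x y, unitWeight x * outerWeight y *
      (∫⁻ z, posIndicator (√z - √x - √y) * outerWeight z * rsqrt (kallen x y z))
        ≤ ENNReal.ofReal π * (unitWeight x * rsqrt (2 * √x)) * (outerWeight y * rsqrt y) := by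
    intro x y
    by_cases hx : x ∈ Ioo 0 1
    · by_cases hy : y ∈ Ioi 1
      · have hbound := lintegral_outerWeight_rsqrt_kallen_le (Real.sqrt_pos.mpr hx.1)
          (by simpa [Real.sqrt_lt'] using hx.2) (Real.lt_sqrt_of_sq_lt (by simpa using hy))
        rw [Real.sq_sqrt hx.1.le, Real.sq_sqrt (one_pos.trans hy).le] at hbound
        calc _ ≤ unitWeight x * outerWeight y * (ENNReal.ofReal π * rsqrt (2 * √x) * rsqrt y) := by
              gcongr
          _ = _ := by ring
      · simp [outerWeight_of_notMem hy]
    · simp [unitWeight_of_notMem hx]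
  calc _ ≤ ∫⁻ x, ∫⁻ y,
        ENNReal.ofReal π * (unitWeight x * rsqrt (2 * √x)) * (outerWeight y * rsqrt y) :=
        lintegral_mono fun x => lintegral_mono fun y => hinner x y
    _ = ENNReal.ofReal π * (∫⁻ x, unitWeight x * rsqrt (2 * √x)) * ENNReal.ofReal π := by
        simp only [lintegral_const_mul _
          (show Measurable fun y => outerWeight y * rsqrt y by fun_prop),
          lintegral_outerWeight_mul_rsqrt]
        rw [lintegral_mul_const _ (by fun_prop), lintegral_const_mul _ (by fun_prop)]
    _ < ∞ := ENNReal.mul_lt_top (ENNReal.mul_lt_top ENNReal.ofReal_lt_top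
        lintegral_unitWeight_mul_rsqrt_sqrt_lt_top) ENNReal.ofReal_lt_top

/-- The triple integral of `1 / √(-kallen)` against two unit weights and one outer weight. -/
noncomputable def mixedKallenIntegral : ℝ≥0∞ :=
  ∫⁻ x, ∫⁻ y, ∫⁻ z, unitWeight x * outerWeight y * (unitWeight z * rsqrt (-kallen x y z))

/-- The triple integral of `1 / √(-kallen)` against three half-line weights. -/
noncomputable def posKallenIntegral : ℝ≥0∞ :=
  ∫⁻ z, ∫⁻ x, ∫⁻ y, posWeight z * (posWeight x * posWeight y * rsqrt (-kallen x y z))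

lemma ae_lintegral_rsqrt_kallen_balance (x : ℝ) : ∀ᵐ y, unitWeight x * outerWeight y *
    ((∫⁻ z, posWeight (-z) * rsqrt (kallen x y z)) +
      ∫⁻ z, posIndicator (√z - √x - √y) * outerWeight z * rsqrt (kallen x y z))
    = unitWeight x * outerWeight y * ((∫⁻ z, unitWeight z * rsqrt (-kallen x y z)) +
      ∫⁻ z, posIndicator (√y - √x - √z) * outerWeight z * rsqrt (kallen x y z)) := by
  have hne : ∀ᵐ y : ℝ, y ≠ (1 + √x) ^ 2 := by simp [ae_iff]
  filter_upwards [hne] with y hy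
  by_cases hx : x ∈ Ioo 0 1
  · by_cases hy1 : y ∈ Ioi 1
    · have hx1 : √x < 1 := by simpa [Real.sqrt_lt'] using hx.2
      have hy1' : 1 < √y := Real.lt_sqrt_of_sq_lt (by simpa using hy1)
      have hy0 : 0 ≤ y := (one_pos.trans hy1).le
      have hsub : (√y - √x) ^ 2 ≠ 1 := fun h => hy <| by
        rw [pow_eq_one_iff_of_nonneg (by linarith) two_ne_zero, sub_eq_iff_eq_add] at h
        rw [← h, Real.sq_sqrt hy0]
      have h := lintegral_rsqrt_kallen_balance (Real.sqrt_pos.mpr hx.1) hx1 hy1' hsub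
      rw [Real.sq_sqrt hx.1.le, Real.sq_sqrt hy0] at h
      rw [h]
    · simp [outerWeight_of_notMem hy1]
  · simp [unitWeight_of_notMem hx]

/-- The two terms with an indicator in the balance are exchanged by `y ↔ z`; being finite, they
cancel. -/
lemma lintegral_posWeight_neg_rsqrt_kallen :
    ∫⁻ x, ∫⁻ y, ∫⁻ z, unitWeight x * outerWeight y * (posWeight (-z) * rsqrt (kallen x y z))
      = mixedKallenIntegral := by
  have hfin : ∀ x y, unitWeight x * outerWeight y ≠ ∞ := fun x y =>
    ENNReal.mul_ne_top (unitWeight_ne_top x) (outerWeight_ne_top y)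
  have hbalance := lintegral_congr (μ := volume) fun x =>
    lintegral_congr_ae (ae_lintegral_rsqrt_kallen_balance x)
  simp only [mul_add] at hbalance
  rw [lintegral_lintegral_add, lintegral_lintegral_add] at hbalance
  rotate_left
  · exact (by fun_prop : Measurable fun p : ℝ × ℝ => unitWeight p.1 * outerWeight p.2).mul
      (measurable_lintegral_right (by fun_prop))
  · exact (by fun_prop : Measurable fun p : ℝ × ℝ => unitWeight p.1 * outerWeight p.2).mul
      (measurable_lintegral_right (by fun_prop))
  have hswap : ∫⁻ x, ∫⁻ y, unitWeight x * outerWeight y *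
        (∫⁻ z, posIndicator (√y - √x - √z) * outerWeight z * rsqrt (kallen x y z))
      = ∫⁻ x, ∫⁻ y, unitWeight x * outerWeight y *
        ∫⁻ z, posIndicator (√z - √x - √y) * outerWeight z * rsqrt (kallen x y z) := by
    simp only [← lintegral_const_mul' _ _ (hfin _ _)]
    rw [lintegral_swap_inner (by fun_prop)]
    refine lintegral_congr fun x => lintegral_congr fun y => lintegral_congr fun z => ?_
    rw [kallen_right_comm x z y]
    ring
  rw [hswap, ENNReal.add_left_inj lintegral_outerWeight_excess_lt_top.ne] at hbalance
  simpa only [mixedKallenIntegral, lintegral_const_mul' _ _ (hfin _ _)] using hbalance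

lemma posKallenIntegral_eq_two_mul_mixedKallenIntegral :
    posKallenIntegral = 2 * mixedKallenIntegral := by
  have hfiber : ∀ z, ∫⁻ x, ∫⁻ y, posWeight z * (posWeight x * posWeight y * rsqrt (-kallen x y z))
      = 2 * ∫⁻ x, ∫⁻ y, posWeight z * (unitWeight x * outerWeight y * rsqrt (kallen x y (-z))) := by
    intro z
    by_cases hz : z ∈ Ioi 0
    · simp only [lintegral_const_mul' _ _ (posWeight_ne_top z)]
      rw [lintegral_posWeight_rsqrt_kallen hz, mul_left_comm]
    · simp [posWeight_of_notMem hz]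
  simp only [posKallenIntegral, hfiber]
  rw [lintegral_const_mul' _ _ ENNReal.ofNat_ne_top,
    lintegral_comp_affine (k := -1) (by norm_num) 0, ← lintegral_posWeight_neg_rsqrt_kallen]
  simp only [abs_neg, abs_one, ENNReal.ofReal_one, one_mul, neg_mul, add_zero, neg_neg]
  rw [lintegral_swap_outer (by fun_prop), lintegral_swap_inner (by fun_prop)]
  simp only [mul_left_comm]

/-! ### The duality `(a, b, c) ↦ ((b - a) / c, (a + b) / c, 2 / c)` of triangle sides -/

lemma posIndicator_ne_top (t : ℝ) : posIndicator t ≠ ∞ :=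
  ne_top_of_le_ne_top ENNReal.one_ne_top (posIndicator_le_one t)

lemma posIndicator_mul_of_pos {k : ℝ} (hk : 0 < k) (t : ℝ) :
    posIndicator (k * t) = posIndicator t := by
  simp [posIndicator, indicator, hk]

lemma rsqrt_inv_sq_mul {k : ℝ} (hk : 0 < k) (t : ℝ) :
    rsqrt (k⁻¹ ^ 2 * t) = ENNReal.ofReal k * rsqrt t := by
  rw [rsqrt_mul_of_nonneg_left (by positivity), rsqrt_sq (by positivity), recip, inv_inv]

lemma lintegral_rsqrt_mul (g : ℝ → ℝ≥0∞) :
    ∫⁻ x, rsqrt x * g x = 2 * ∫⁻ a in Ioi 0, g (a ^ 2) := by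
  rw [lintegral_eq_setLIntegral_of_forall_notMem (s := Ioi 0)
      (fun x hx => by rw [rsqrt_of_nonpos (not_lt.mp hx), zero_mul]),
    setLIntegral_Ioi_comp_sq, ← lintegral_const_mul' _ _ ENNReal.ofNat_ne_top]
  refine setLIntegral_congr_fun measurableSet_Ioi fun u (hu : 0 < u) => ?_
  rw [rsqrt_sq hu.le, ← mul_assoc, ENNReal.ofReal_mul two_pos.le, ENNReal.ofReal_ofNat,
    mul_assoc 2, ofReal_mul_recip_self hu, mul_one]

lemma setLIntegral_Ioi_eq_lintegral_posIndicator_mul (g : ℝ → ℝ≥0∞) :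
    ∫⁻ x in Ioi 0, g x = ∫⁻ x, posIndicator x * g x := by
  rw [← lintegral_indicator measurableSet_Ioi]
  refine lintegral_congr fun x => ?_
  by_cases hx : 0 < x <;> simp [posIndicator, hx]

lemma lintegral_rsqrt_mul_rsqrt_mul (G : ℝ → ℝ → ℝ≥0∞) :
    ∫⁻ x, ∫⁻ y, rsqrt x * rsqrt y * G x y
      = 4 * ∫⁻ a, ∫⁻ b, posIndicator a * posIndicator b * G (a ^ 2) (b ^ 2) := by
  simp only [mul_assoc, lintegral_const_mul' _ _ (rsqrt_ne_top _), lintegral_rsqrt_mul,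
    setLIntegral_Ioi_eq_lintegral_posIndicator_mul,
    lintegral_const_mul' _ _ (posIndicator_ne_top _),
    mul_left_comm _ (2 : ℝ≥0∞), lintegral_const_mul' _ _ (ENNReal.ofNat_ne_top (n := 2))]
  rw [← mul_assoc]
  norm_num

lemma setLIntegral_Ioi_comp_div {r : ℝ} (hr : 0 < r) (f : ℝ → ℝ≥0∞) :
    ∫⁻ c in Ioi 0, f c = ∫⁻ k in Ioi 0, ENNReal.ofReal (r / k ^ 2) * f (r / k) := by
  have h := setLIntegral_comp_mobius (a := r) (b := 0) (c := 0) (d := 1) (s := Ioi 0) (t := Ioi 0)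
    (by simpa using hr.ne') measurableSet_Ioi
    (fun x (hx : 0 < x) => by simpa using ⟨hx.ne', div_pos hr hx⟩)
    (fun y (hy : 0 < y) => by simpa using ⟨hy.ne', div_pos hr hy⟩) f
  simpa [abs_of_pos hr] using h

lemma lintegral_lintegral_comp_sub_add {c : ℝ} (hc : 0 < c) {F : ℝ → ℝ → ℝ≥0∞}
    (hF : Measurable fun p : ℝ × ℝ => F p.1 p.2) :
    ∫⁻ a, ∫⁻ b, F a b
      = ENNReal.ofReal (2 * c ^ 2) * ∫⁻ u, ∫⁻ v, F (c * (v - u)) (c * (u + v)) := by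
  have hb : ∀ a, ∫⁻ b, F a b = ENNReal.ofReal (2 * c) * ∫⁻ v, F a (2 * c * v - a) := fun a => by
    rw [lintegral_comp_affine (k := 2 * c) (by positivity) (-a), abs_of_pos (by positivity)]
    rfl
  have ha : ∀ v, ∫⁻ a, F a (2 * c * v - a)
      = ENNReal.ofReal c * ∫⁻ u, F (c * (v - u)) (c * (u + v)) := fun v => by
    rw [lintegral_comp_affine (k := -c) (by linarith) (c * v), abs_neg, abs_of_pos hc]
    congr 1
    refine lintegral_congr fun u => ?_
    congr 1 <;> ring
  simp only [hb]
  rw [lintegral_const_mul' _ _ ENNReal.ofReal_ne_top,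
    lintegral_lintegral_swap_of_measurable (f := fun a v => F a (2 * c * v - a)) <|
    hF.comp (by fun_prop : Measurable fun p : ℝ × ℝ => (p.1, 2 * c * p.2 - p.1))]
  simp only [ha]
  rw [lintegral_const_mul' _ _ ENNReal.ofReal_ne_top, ← mul_assoc,
    ← ENNReal.ofReal_mul (by positivity),
    lintegral_lintegral_swap_of_measurable (f := fun v u => F (c * (v - u)) (c * (u + v))) <|
    hF.comp (by fun_prop : Measurable fun p : ℝ × ℝ => (c * (p.1 - p.2), c * (p.2 + p.1)))]
  ring_nf

/-- The density of the triple integrals in terms of side lengths `a < 1 < b` and `c`. By Heron's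
formula, `((a + b)² - c²) (c² - (a - b)²)` is 16 times the squared area of the triangle. -/
noncomputable def triangleDensity (a b c : ℝ) : ℝ≥0∞ :=
  posIndicator a * posIndicator b * (rsqrt (1 - a ^ 2) * rsqrt (b ^ 2 - 1) *
    (rsqrt ((a + b) ^ 2 - c ^ 2) * rsqrt (c ^ 2 - (a - b) ^ 2)))

@[fun_prop] lemma measurable_triangleDensity {α : Type*} [MeasurableSpace α] {f g h : α → ℝ}
    (hf : Measurable f) (hg : Measurable g) (hh : Measurable h) :
    Measurable fun x => triangleDensity (f x) (g x) (h x) := by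
  unfold triangleDensity; fun_prop

lemma posIndicator_mul_rsqrt_neg_kallen_sq (a b c : ℝ) :
    posIndicator a * posIndicator b *
        (rsqrt (1 - a ^ 2) * rsqrt (b ^ 2 - 1) * rsqrt (-kallen (a ^ 2) (b ^ 2) (c ^ 2)))
      = triangleDensity a b c := by
  unfold triangleDensity
  rcases le_or_gt a 0 with ha | ha
  · simp [posIndicator_of_nonpos ha]
  rcases le_or_gt b 0 with hb | hb
  · simp [posIndicator_of_nonpos hb]
  have hheron : -kallen (a ^ 2) (b ^ 2) (c ^ 2)
      = ((a + b) ^ 2 - c ^ 2) * (c ^ 2 - (a - b) ^ 2) := by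
    unfold kallen; ring
  rw [hheron, rsqrt_mul_of_add_nonneg (by nlinarith [mul_pos ha hb])]

lemma posIndicator_sub_mul_posIndicator_add {u v k : ℝ} (huv : |u| < |v|)
    (hsub : (u - v) ^ 2 < k ^ 2) (hadd : k ^ 2 < (u + v) ^ 2) :
    posIndicator (v - u) * posIndicator (u + v) = posIndicator u * posIndicator v := by
  have hprod : 0 < u * v := by nlinarith
  rcases pos_and_pos_or_neg_and_neg_of_mul_pos hprod with ⟨hu, hv⟩ | ⟨hu, hv⟩
  · rw [abs_of_pos hu, abs_of_pos hv] at huv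
    rw [posIndicator_of_pos hu, posIndicator_of_pos hv, posIndicator_of_pos (sub_pos.mpr huv),
      posIndicator_of_pos (add_pos hu hv)]
  · rw [posIndicator_of_nonpos hu.le, posIndicator_of_nonpos (add_neg hu hv).le, mul_zero, zero_mul]

lemma triangleDensity_dual {k : ℝ} (hk : 0 < k) (u v : ℝ) :
    triangleDensity (k⁻¹ * (v - u)) (k⁻¹ * (u + v)) (2 / k)
      = ENNReal.ofReal (k ^ 4 / 4) * triangleDensity u v k := by
  have hhalf : 0 < k / 2 := by positivity
  have hfst : 1 - (k⁻¹ * (v - u)) ^ 2 = k⁻¹ ^ 2 * (k ^ 2 - (u - v) ^ 2) := by field_simp; ring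
  have hsnd : (k⁻¹ * (u + v)) ^ 2 - 1 = k⁻¹ ^ 2 * ((u + v) ^ 2 - k ^ 2) := by field_simp
  have hadd : (k⁻¹ * (v - u) + k⁻¹ * (u + v)) ^ 2 - (2 / k) ^ 2
      = (k / 2)⁻¹ ^ 2 * (v ^ 2 - 1) := by
    field_simp; ring
  have hsub : (2 / k) ^ 2 - (k⁻¹ * (v - u) - k⁻¹ * (u + v)) ^ 2
      = (k / 2)⁻¹ ^ 2 * (1 - u ^ 2) := by
    field_simp; ring
  have hconst : ENNReal.ofReal (k ^ 4 / 4)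
      = ENNReal.ofReal k ^ 2 * ENNReal.ofReal (k / 2) ^ 2 := by
    rw [← ENNReal.ofReal_pow hk.le, ← ENNReal.ofReal_pow hhalf.le,
      ← ENNReal.ofReal_mul (by positivity)]
    congr 1
    ring
  have hsign : posIndicator (v - u) * posIndicator (u + v) *
      (rsqrt (1 - u ^ 2) * rsqrt (v ^ 2 - 1) *
        (rsqrt ((u + v) ^ 2 - k ^ 2) * rsqrt (k ^ 2 - (u - v) ^ 2))) = triangleDensity u v k := by
    unfold triangleDensity
    by_cases h : u ^ 2 < 1 ∧ 1 < v ^ 2 ∧ k ^ 2 < (u + v) ^ 2 ∧ (u - v) ^ 2 < k ^ 2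
    · obtain ⟨hu, hv, hadd, hsub⟩ := h
      rw [posIndicator_sub_mul_posIndicator_add (sq_lt_sq.mp (hu.trans hv)) hsub hadd]
    · simp only [not_and_or, not_lt] at h
      rcases h with h | h | h | h <;> simp [rsqrt_of_nonpos (sub_nonpos.mpr h)]
  rw [← hsign, hconst, triangleDensity, hfst, hsnd, hadd, hsub]
  simp only [posIndicator_mul_of_pos (inv_pos.mpr hk), rsqrt_inv_sq_mul hk, rsqrt_inv_sq_mul hhalf]
  ring

/-- The image of `mixedKallenIntegral` under the duality of triangle sides. -/
noncomputable def dualKallenIntegral : ℝ≥0∞ :=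
  ∫⁻ w, ∫⁻ x, ∫⁻ y, unitWeight x * outerWeight y * (rsqrt (w - 4) * rsqrt (-kallen x y w))

lemma lintegral_unitWeight_outerWeight_rsqrt_neg_kallen_sq (c : ℝ) :
    ∫⁻ x, ∫⁻ y, unitWeight x * outerWeight y * rsqrt (-kallen x y (c ^ 2))
      = 4 * ∫⁻ a, ∫⁻ b, triangleDensity a b c := by
  simp only [← posIndicator_mul_rsqrt_neg_kallen_sq]
  rw [← lintegral_rsqrt_mul_rsqrt_mul
    fun x y => rsqrt (1 - x) * rsqrt (y - 1) * rsqrt (-kallen x y (c ^ 2))]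
  refine lintegral_congr fun x => lintegral_congr fun y => ?_
  unfold unitWeight outerWeight
  ring

lemma mixedKallenIntegral_eq_triangleDensity : mixedKallenIntegral
    = 8 * ∫⁻ c in Ioi 0, rsqrt (1 - c ^ 2) * ∫⁻ a, ∫⁻ b, triangleDensity a b c := by
  have hfiber : ∀ z,
      ∫⁻ x, ∫⁻ y, unitWeight x * outerWeight y * (unitWeight z * rsqrt (-kallen x y z))
      = rsqrt z * (rsqrt (1 - z) *
        ∫⁻ x, ∫⁻ y, unitWeight x * outerWeight y * rsqrt (-kallen x y z)) := fun z => by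
    simp only [mul_left_comm _ (unitWeight z), lintegral_const_mul' _ _ (unitWeight_ne_top z)]
    rw [unitWeight, mul_assoc]
  rw [mixedKallenIntegral, lintegral_swap_inner (by fun_prop), lintegral_swap_outer (by fun_prop)]
  simp only [hfiber, lintegral_rsqrt_mul, lintegral_unitWeight_outerWeight_rsqrt_neg_kallen_sq,
    mul_left_comm _ (4 : ℝ≥0∞), lintegral_const_mul' _ _ (ENNReal.ofNat_ne_top (n := 4))]
  rw [← mul_assoc]
  norm_num

lemma dualKallenIntegral_eq_triangleDensity : dualKallenIntegral
    = 8 * ∫⁻ k in Ioi 0,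
        ENNReal.ofReal k * (rsqrt (k ^ 2 - 4) * ∫⁻ u, ∫⁻ v, triangleDensity u v k) := by
  have hfiber : ∀ w,
      ∫⁻ x, ∫⁻ y, unitWeight x * outerWeight y * (rsqrt (w - 4) * rsqrt (-kallen x y w))
      = rsqrt w * (ENNReal.ofReal √w * (rsqrt (w - 4) *
        ∫⁻ x, ∫⁻ y, unitWeight x * outerWeight y * rsqrt (-kallen x y w))) := fun w => by
    simp only [mul_left_comm _ (rsqrt (w - 4)), lintegral_const_mul' _ _ (rsqrt_ne_top (w - 4))]
    rcases le_or_gt w 4 with hw | hw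
    · simp [rsqrt_of_nonpos (sub_nonpos.mpr hw)]
    · have hcancel : ENNReal.ofReal √w * rsqrt w = 1 :=
        ofReal_mul_recip_self (Real.sqrt_pos.mpr (by linarith))
      rw [← mul_assoc (rsqrt w), mul_comm (rsqrt w), hcancel, one_mul]
  simp only [dualKallenIntegral, hfiber, lintegral_rsqrt_mul,
    lintegral_unitWeight_outerWeight_rsqrt_neg_kallen_sq,
    mul_left_comm _ (4 : ℝ≥0∞), lintegral_const_mul' _ _ (ENNReal.ofNat_ne_top (n := 4))]
  rw [← mul_assoc, show (4 : ℝ≥0∞) * 2 = 8 by norm_num]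
  congr 1
  refine setLIntegral_congr_fun measurableSet_Ioi fun k (hk : 0 < k) => ?_
  rw [Real.sqrt_sq hk.le]

lemma mixedKallenIntegral_eq_dualKallenIntegral :
    mixedKallenIntegral = dualKallenIntegral := by
  rw [mixedKallenIntegral_eq_triangleDensity, dualKallenIntegral_eq_triangleDensity,
    setLIntegral_Ioi_comp_div two_pos]
  congr 1
  refine setLIntegral_congr_fun measurableSet_Ioi fun k (hk : 0 < k) => ?_
  have hconst : ENNReal.ofReal (2 / k ^ 2) * ENNReal.ofReal k * ENNReal.ofReal (2 * k⁻¹ ^ 2) *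
      ENNReal.ofReal (k ^ 4 / 4) = ENNReal.ofReal k := by
    rw [← ENNReal.ofReal_mul (by positivity), ← ENNReal.ofReal_mul (by positivity),
      ← ENNReal.ofReal_mul (by positivity)]
    congr 1
    field_simp
    norm_num
  have hscale : 1 - (2 / k) ^ 2 = k⁻¹ ^ 2 * (k ^ 2 - 4) := by field_simp; ring
  rw [lintegral_lintegral_comp_sub_add (inv_pos.mpr hk) (by fun_prop), hscale, rsqrt_inv_sq_mul hk]
  simp only [triangleDensity_dual hk, lintegral_const_mul' _ _ ENNReal.ofReal_ne_top]
  conv_rhs => rw [← hconst]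
  ring

/-! ### From the dual integral to unit weights -/

/-- The triple integral of `1 / √(-kallen)` against two unit weights and the weight
`1 / √(4 - w)`. -/
noncomputable def unitKallenIntegral : ℝ≥0∞ :=
  ∫⁻ x, ∫⁻ y, ∫⁻ w, unitWeight x * unitWeight y * (rsqrt (4 - w) * rsqrt (-kallen x y w))

lemma kallen_sq_sq_nonneg_of_notMem {a b z : ℝ} (hz : z ∉ Ioo ((b - a) ^ 2) ((b + a) ^ 2))
    (hab : 0 ≤ a * b) : 0 ≤ kallen (a ^ 2) (b ^ 2) z := by
  have hle : (b - a) ^ 2 ≤ (b + a) ^ 2 := by nlinarith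
  rw [kallen_sq_sq]
  rcases le_or_gt z ((b - a) ^ 2) with h | h
  · exact mul_nonneg_of_nonpos_of_nonpos (by linarith) (by linarith [hle])
  · exact mul_nonneg (by linarith) (sub_nonneg.mpr (not_lt.mp fun h' => hz ⟨h, h'⟩))

lemma lintegral_mul_rsqrt_neg_kallen_sq_sq {a b : ℝ} (hab : 0 ≤ a * b) (f : ℝ → ℝ≥0∞) :
    ∫⁻ z, f z * rsqrt (-kallen (a ^ 2) (b ^ 2) z)
      = ∫⁻ z in Ioo ((b - a) ^ 2) ((b + a) ^ 2), f z * rsqrt (-kallen (a ^ 2) (b ^ 2) z) :=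
  lintegral_eq_setLIntegral_of_forall_notMem fun z hz => by
    rw [rsqrt_of_nonpos (neg_nonpos.mpr (kallen_sq_sq_nonneg_of_notMem hz hab)), mul_zero]

lemma lintegral_outerWeight_rsqrt_neg_kallen {a c : ℝ} (ha : 0 < a) (hac : a + 1 < c) :
    ∫⁻ y, outerWeight y * rsqrt (-kallen (a ^ 2) (c ^ 2) y)
      = ∫⁻ y, unitWeight y * rsqrt (kallen (a ^ 2) (c ^ 2) y) := by
  have hlt : (c - a) ^ 2 < (c + a) ^ 2 := by nlinarith
  have hone : 1 < (c - a) ^ 2 := by nlinarith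
  have houter := setLIntegral_Ioo_rsqrt_quartic hlt 0 1 (-1) 1 (by linarith) (by linarith)
  have hunit := setLIntegral_Ioo_rsqrt_quartic one_pos ((c - a) ^ 2) (-1) ((c + a) ^ 2) (-1)
    (by linarith) (by linarith)
  rw [lintegral_mul_rsqrt_neg_kallen_sq_sq (mul_nonneg ha.le (by linarith)),
    lintegral_eq_setLIntegral_of_forall_notMem (s := Ioo 0 1)
      (f := fun y => unitWeight y * rsqrt (kallen (a ^ 2) (c ^ 2) y))
      fun y hy => by rw [unitWeight_of_notMem hy, zero_mul]]
  calc ∫⁻ y in Ioo ((c - a) ^ 2) ((c + a) ^ 2), outerWeight y * rsqrt (-kallen (a ^ 2) (c ^ 2) y)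
    _ = ellipticPeriod ((c - a) ^ 2 * ((c + a) ^ 2 - 1)) ((c + a) ^ 2 * ((c - a) ^ 2 - 1)) := by
      convert houter using 1
      · refine setLIntegral_congr_fun measurableSet_Ioo fun y hy => ?_
        rw [outerWeight_mul_rsqrt (hone.trans hy.1), kallen_sq_sq]
        ring_nf
      · ring_nf
    _ = ∫⁻ y in Ioo 0 1, unitWeight y * rsqrt (kallen (a ^ 2) (c ^ 2) y) := by
      symm
      convert hunit using 1
      · refine setLIntegral_congr_fun measurableSet_Ioo fun y hy => ?_
        rw [unitWeight_mul_rsqrt hy, kallen_sq_sq]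
        ring_nf
      · ring_nf

lemma lintegral_rsqrt_sub_four_rsqrt_kallen {a b : ℝ} (hab : 0 < a * b) (hlt : (b + a) ^ 2 < 4) :
    ∫⁻ w, rsqrt (w - 4) * rsqrt (kallen (a ^ 2) (b ^ 2) w)
      = ∫⁻ w, rsqrt (4 - w) * rsqrt (-kallen (a ^ 2) (b ^ 2) w) := by
  have hle : (b - a) ^ 2 < (b + a) ^ 2 := by nlinarith
  have hhalfline := setLIntegral_Ioi_rsqrt_cubic_shift 4 (-(b - a) ^ 2) (-(b + a) ^ 2)
    one_pos one_pos
  have hsegment := setLIntegral_Ioo_rsqrt_quartic hle 4 (-1) 1 0 (by linarith) (by linarith)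
  rw [lintegral_mul_rsqrt_neg_kallen_sq_sq hab.le,
    lintegral_eq_setLIntegral_of_forall_notMem (s := Ioi 4) fun w hw => by
      rw [rsqrt_of_nonpos (sub_nonpos.mpr (not_lt.mp hw)), zero_mul]]
  calc ∫⁻ w in Ioi 4, rsqrt (w - 4) * rsqrt (kallen (a ^ 2) (b ^ 2) w)
    _ = ellipticPeriod (4 - (b - a) ^ 2) (4 - (b + a) ^ 2) := by
      convert hhalfline using 1
      · refine setLIntegral_congr_fun measurableSet_Ioi fun w (hw : 4 < w) => ?_
        rw [← rsqrt_mul_of_nonneg_left (by linarith), kallen_sq_sq]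
        ring_nf
      · ring_nf
    _ = ∫⁻ w in Ioo ((b - a) ^ 2) ((b + a) ^ 2),
          rsqrt (4 - w) * rsqrt (-kallen (a ^ 2) (b ^ 2) w) := by
      symm
      convert hsegment using 1
      · refine setLIntegral_congr_fun measurableSet_Ioo fun w hw => ?_
        rw [← rsqrt_mul_of_nonneg_left (by linarith [hw.2]), kallen_sq_sq]
        ring_nf
      · ring_nf

lemma dualKallenIntegral_eq_lintegral_unitWeight : dualKallenIntegral
    = ∫⁻ w, ∫⁻ x, ∫⁻ y, unitWeight x * unitWeight y * (rsqrt (w - 4) * rsqrt (kallen x y w)) := by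
  refine lintegral_congr fun w => lintegral_congr fun x => ?_
  rcases le_or_gt w 4 with hw | hw
  · simp [rsqrt_of_nonpos (sub_nonpos.mpr hw)]
  by_cases hx : x ∈ Ioo 0 1
  swap
  · simp [unitWeight_of_notMem hx]
  have hsqrt_x : √x < 1 := by simpa [Real.sqrt_lt'] using hx.2
  have hsqrt_w : 2 < √w := Real.lt_sqrt_of_sq_lt (by linarith)
  have hfiber := lintegral_outerWeight_rsqrt_neg_kallen (Real.sqrt_pos.mpr hx.1)
    (by linarith : √x + 1 < √w)
  rw [Real.sq_sqrt hx.1.le, Real.sq_sqrt (by linarith)] at hfiber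
  simp only [mul_assoc, mul_left_comm _ (rsqrt (w - 4)), kallen_right_comm x _ w,
    lintegral_const_mul' _ _ (rsqrt_ne_top _), lintegral_const_mul' _ _ (unitWeight_ne_top _),
    hfiber]

lemma dualKallenIntegral_eq_unitKallenIntegral : dualKallenIntegral = unitKallenIntegral := by
  rw [dualKallenIntegral_eq_lintegral_unitWeight, lintegral_swap_outer (by fun_prop),
    lintegral_swap_inner (by fun_prop)]
  refine lintegral_congr fun x => lintegral_congr fun y => ?_
  by_cases hx : x ∈ Ioo 0 1
  swap
  · simp [unitWeight_of_notMem hx]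
  by_cases hy : y ∈ Ioo 0 1
  swap
  · simp [unitWeight_of_notMem hy]
  have hsqrt_x : √x < 1 := by simpa [Real.sqrt_lt'] using hx.2
  have hsqrt_y : √y < 1 := by simpa [Real.sqrt_lt'] using hy.2
  have hpos_x := Real.sqrt_pos.mpr hx.1
  have hpos_y := Real.sqrt_pos.mpr hy.1
  have hfiber := lintegral_rsqrt_sub_four_rsqrt_kallen (mul_pos hpos_x hpos_y) (by nlinarith)
  rw [Real.sq_sqrt hx.1.le, Real.sq_sqrt hy.1.le] at hfiber
  have hfin := ENNReal.mul_ne_top (unitWeight_ne_top x) (unitWeight_ne_top y)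
  rw [lintegral_const_mul' _ _ hfin, hfiber, lintegral_const_mul' _ _ hfin]

lemma posKallenIntegral_eq_two_mul_unitKallenIntegral :
    posKallenIntegral = 2 * unitKallenIntegral := by
  rw [posKallenIntegral_eq_two_mul_mixedKallenIntegral, mixedKallenIntegral_eq_dualKallenIntegral,
    dualKallenIntegral_eq_unitKallenIntegral]

/-! ### Watson's integral -/

/-- Lebesgue measure on one period of the cosine. -/
noncomputable abbrev periodMeasure : Measure ℝ := volume.restrict (Ioc (-π) π)

lemma lintegral_periodMeasure_comp_add {f : ℝ → ℝ≥0∞} (hf : Function.Periodic f (2 * π)) (c : ℝ) :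
    ∫⁻ x, f (x + c) ∂periodMeasure = ∫⁻ x, f x ∂periodMeasure := by
  have hshift : ∫⁻ x in Ioc (-π) π, f (x + c) = ∫⁻ x in Ioc (-π + c) (π + c), f x := by
    have hpre : (· + c) ⁻¹' Ioc (-π + c) (π + c) = Ioc (-π) π := by simp
    rw [← (measurePreserving_add_right volume c).setLIntegral_comp_preimage_emb
      (MeasurableEquiv.addRight c).measurableEmbedding f (Ioc (-π + c) (π + c)), hpre]
  have hdomain := isAddFundamentalDomain_Ioc (T := 2 * π) (by positivity) (-π)
  have hdomain_shift := isAddFundamentalDomain_Ioc (T := 2 * π) (by positivity) (-π + c)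
  rw [show -π + 2 * π = π by ring] at hdomain
  rw [show -π + c + 2 * π = π + c by ring] at hdomain_shift
  rw [hshift]
  refine hdomain_shift.setLIntegral_eq hdomain f ?_
  rintro ⟨g, hg⟩ x
  obtain ⟨n, rfl⟩ := AddSubgroup.mem_zmultiples_iff.mp hg
  change f (n • (2 * π) + x) = f x
  rw [add_comm]
  exact hf.zsmul n x

lemma lintegral_periodMeasure_of_even {f : ℝ → ℝ≥0∞} (hf : ∀ x, f (-x) = f x) :
    ∫⁻ x, f x ∂periodMeasure = 2 * ∫⁻ x in Ioo 0 π, f x := by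
  have hneg : ∫⁻ x in Ioo (-π) 0, f x = ∫⁻ x in Ioo 0 π, f x := by
    have hpre : (fun x : ℝ => -x) ⁻¹' Ioo (-π) 0 = Ioo 0 π := by simp
    rw [← (Measure.measurePreserving_neg (volume : Measure ℝ)).setLIntegral_comp_preimage_emb
      (MeasurableEquiv.neg ℝ).measurableEmbedding, hpre]
    simp only [hf _]
  rw [periodMeasure, ← Ioc_union_Ioc_eq_Ioc (neg_nonpos.mpr pi_pos.le) pi_pos.le,
    lintegral_union measurableSet_Ioc (Ioc_disjoint_Ioc_of_le le_rfl),
    setLIntegral_congr Ioo_ae_eq_Ioc.symm, hneg, two_mul,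
    setLIntegral_congr (Ioo_ae_eq_Ioc (a := 0) (b := π)).symm]

lemma setLIntegral_comp_cos (f : ℝ → ℝ≥0∞) :
    ∫⁻ x in Ioo 0 π, f (cos x) = ∫⁻ u in Ioo (-1) 1, rsqrt (1 - u ^ 2) * f u := by
  have hmaps : MapsTo cos (Ioo 0 π) (Ioo (-1) 1) := fun x hx =>
    ⟨cos_pi ▸ cos_lt_cos_of_nonneg_of_le_pi hx.1.le le_rfl hx.2,
      cos_zero ▸ cos_lt_cos_of_nonneg_of_le_pi le_rfl hx.2.le hx.1⟩
  have hmaps_inv : MapsTo arccos (Ioo (-1) 1) (Ioo 0 π) := fun u hu =>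
    ⟨arccos_pos.mpr hu.2, (arccos_le_pi u).lt_of_ne fun h => hu.1.not_ge (arccos_eq_pi.mp h)⟩
  have hinv : InvOn arccos cos (Ioo 0 π) (Ioo (-1) 1) :=
    ⟨fun x hx => arccos_cos hx.1.le hx.2.le, fun u hu => cos_arccos hu.1.le hu.2.le⟩
  rw [setLIntegral_eq_of_invOn measurableSet_Ioo (fun x _ => hasDerivAt_cos x) hmaps hmaps_inv hinv]
  refine setLIntegral_congr_fun measurableSet_Ioo fun x hx => ?_
  have hsin : 0 < sin x := sin_pos_of_pos_of_lt_pi hx.1 hx.2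
  rw [abs_neg, abs_of_pos hsin, ← sin_sq, rsqrt_sq hsin.le, ← mul_assoc,
    ofReal_mul_recip_self hsin, one_mul]

lemma setLIntegral_Ioo_comp_affine {k : ℝ} (hk : 0 < k) (d p q : ℝ) (f : ℝ → ℝ≥0∞) :
    ∫⁻ y in Ioo (k * p + d) (k * q + d), f y
      = ENNReal.ofReal k * ∫⁻ x in Ioo p q, f (k * x + d) := by
  have hmem : ∀ x, k * x + d ∈ Ioo (k * p + d) (k * q + d) ↔ x ∈ Ioo p q := fun x => by simp [hk]
  rw [← lintegral_indicator measurableSet_Ioo, ← lintegral_indicator measurableSet_Ioo,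
    lintegral_comp_affine hk.ne' d, abs_of_pos hk]
  simp only [indicator, hmem]

lemma setLIntegral_comp_cos_half (f : ℝ → ℝ≥0∞) :
    ∫⁻ t in Ioo 0 π, f (cos (t / 2)) = ∫⁻ x, unitWeight x * f √x := by
  have hcos : ∫⁻ t in Ioo 0 π, f (cos (t / 2)) = ∫⁻ t in Ioo 0 π, f √((1 + cos t) / 2) :=
    setLIntegral_congr_fun measurableSet_Ioo fun t ht => by
      rw [cos_half (by linarith [ht.1, pi_pos]) ht.2.le]
  have haffine := setLIntegral_Ioo_comp_affine two_pos (-1) 0 1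
    fun u => rsqrt (1 - u ^ 2) * f √((1 + u) / 2)
  rw [show (2 : ℝ) * 0 + -1 = -1 by norm_num, show (2 : ℝ) * 1 + -1 = 1 by norm_num] at haffine
  rw [hcos, setLIntegral_comp_cos fun u => f √((1 + u) / 2), haffine,
    lintegral_eq_setLIntegral_of_forall_notMem (s := Ioo 0 1)
      (f := fun x => unitWeight x * f √x) fun x hx => by rw [unitWeight_of_notMem hx, zero_mul],
    ← lintegral_const_mul' _ _ ENNReal.ofReal_ne_top]
  refine setLIntegral_congr_fun measurableSet_Ioo fun x hx => ?_
  rw [show 1 - (2 * x + -1) ^ 2 = 2 ^ 2 * (x * (1 - x)) by ring,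
    show (1 + (2 * x + -1)) / 2 = x by ring, ← mul_assoc, ofReal_mul_rsqrt_sq_mul two_pos,
    rsqrt_mul_of_nonneg_left hx.1.le, unitWeight]

lemma lintegral_cos_add_cos {G : ℝ → ℝ≥0∞} (hG : Measurable G) :
    ∫⁻ s, ∫⁻ t, G (cos s + cos t) ∂periodMeasure ∂periodMeasure
      = 2 * ∫⁻ x, unitWeight x * ∫⁻ s, G (2 * √x * cos s) ∂periodMeasure := by
  have hshift : ∀ s, ∫⁻ t, G (cos s + cos t) ∂periodMeasure
      = ∫⁻ t, G (2 * cos (t / 2) * cos (s + t / 2)) ∂periodMeasure := fun s => by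
    rw [← lintegral_periodMeasure_comp_add (fun t => by simp) s]
    refine lintegral_congr fun t => ?_
    rw [cos_add_cos, show (s + (t + s)) / 2 = s + t / 2 by ring,
      show (s - (t + s)) / 2 = -(t / 2) by ring, cos_neg]
    ring_nf
  have hshift_back : ∀ t, ∫⁻ s, G (2 * cos (t / 2) * cos (s + t / 2)) ∂periodMeasure
      = ∫⁻ s, G (2 * cos (t / 2) * cos s) ∂periodMeasure := fun t =>
    lintegral_periodMeasure_comp_add (f := fun s => G (2 * cos (t / 2) * cos s))
      (fun s => by simp) (t / 2)
  simp only [hshift]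
  rw [lintegral_lintegral_swap_of_measurable (by fun_prop)]
  simp only [hshift_back]
  rw [lintegral_periodMeasure_of_even fun t => by rw [neg_div, cos_neg],
    setLIntegral_comp_cos_half fun r => ∫⁻ s, G (2 * r * cos s) ∂periodMeasure]

lemma exists_mul_cos_add_mul_cos_add_eq (a b t : ℝ) : ∃ d, ∀ s,
    a * cos s + b * cos (s + t) = √(a ^ 2 + b ^ 2 + 2 * a * b * cos t) * cos (s + d) := by
  set z : ℂ := ⟨a + b * cos t, b * sin t⟩
  have hnorm : ‖z‖ = √(a ^ 2 + b ^ 2 + 2 * a * b * cos t) := by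
    rw [Complex.norm_eq_sqrt_sq_add_sq]
    congr 1
    linear_combination b ^ 2 * sin_sq_add_cos_sq t
  have hre : ‖z‖ * cos z.arg = a + b * cos t := Complex.norm_mul_cos_arg z
  have him : ‖z‖ * sin z.arg = b * sin t := Complex.norm_mul_sin_arg z
  refine ⟨z.arg, fun s => ?_⟩
  rw [← hnorm, cos_add, cos_add]
  linear_combination -cos s * hre + sin s * him

lemma lintegral_recip_sub_mul_cos {c r : ℝ} (hr : |r| < c) :
    ∫⁻ s, recip (c - r * cos s) ∂periodMeasure
      = ENNReal.ofReal (2 * π) * rsqrt (c ^ 2 - r ^ 2) := by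
  obtain ⟨hlow, hhigh⟩ := abs_lt.mp hr
  have harcsine := setLIntegral_Ioo_rsqrt_mul_recip (p := -1) (q := 1) (a₀ := c) (a₁ := -r)
    (by norm_num) (by linarith) (by linarith)
  rw [lintegral_periodMeasure_of_even fun s => by rw [cos_neg],
    setLIntegral_comp_cos fun u => recip (c - r * u), ENNReal.ofReal_mul two_pos.le, mul_assoc,
    ENNReal.ofReal_ofNat]
  convert congrArg (2 * ·) harcsine using 5 <;> ring_nf

section Fiber

variable {a b : ℝ}

lemma lintegral_recip_four_sub_cos_phase (ha : 0 < a) (hb : 0 < b) (hab : a + b < 2) (t : ℝ) :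
    ∫⁻ s, recip (4 - (2 * a * cos s + 2 * b * cos (s + t))) ∂periodMeasure
      = ENNReal.ofReal π * rsqrt (4 - (2 * a * b * cos t + (a ^ 2 + b ^ 2))) := by
  obtain ⟨d, hd⟩ := exists_mul_cos_add_mul_cos_add_eq (2 * a) (2 * b) t
  set amplitude := (2 * a) ^ 2 + (2 * b) ^ 2 + 2 * (2 * a) * (2 * b) * cos t with hamplitude
  have hprod := mul_pos ha hb
  have hnonneg : 0 ≤ amplitude := by nlinarith [sq_nonneg (a - b), neg_one_le_cos t]
  have hlt : √amplitude < 4 := by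
    rw [Real.sqrt_lt' (by norm_num)]
    nlinarith [cos_le_one t]
  have hhalf : (4 : ℝ) ^ 2 - amplitude = 2 ^ 2 * (4 - (2 * a * b * cos t + (a ^ 2 + b ^ 2))) := by
    rw [hamplitude]
    ring
  simp only [hd]
  rw [lintegral_periodMeasure_comp_add (f := fun s => recip (4 - √amplitude * cos s))
      (fun s => by simp), lintegral_recip_sub_mul_cos (by rwa [abs_of_nonneg (Real.sqrt_nonneg _)]),
    Real.sq_sqrt hnonneg, hhalf, mul_comm 2 π, ENNReal.ofReal_mul pi_pos.le, mul_assoc,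
    ofReal_mul_rsqrt_sq_mul two_pos]

lemma setLIntegral_rsqrt_one_sub_sq_eq_kallen (hab : 0 < a * b) (f : ℝ → ℝ≥0∞) :
    ∫⁻ u in Ioo (-1) 1, rsqrt (1 - u ^ 2) * f (2 * a * b * u + (a ^ 2 + b ^ 2))
      = ∫⁻ w, f w * rsqrt (-kallen (a ^ 2) (b ^ 2) w) := by
  have hscale : 0 < 2 * a * b := by linarith
  rw [lintegral_mul_rsqrt_neg_kallen_sq_sq hab.le,
    show (b - a) ^ 2 = 2 * a * b * (-1) + (a ^ 2 + b ^ 2) by ring,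
    show (b + a) ^ 2 = 2 * a * b * 1 + (a ^ 2 + b ^ 2) by ring,
    setLIntegral_Ioo_comp_affine hscale, ← lintegral_const_mul' _ _ ENNReal.ofReal_ne_top]
  refine lintegral_congr fun u => ?_
  have hkallen : -kallen (a ^ 2) (b ^ 2) (2 * a * b * u + (a ^ 2 + b ^ 2))
      = (2 * a * b) ^ 2 * (1 - u ^ 2) := by
    unfold kallen; ring
  rw [hkallen, mul_left_comm, ofReal_mul_rsqrt_sq_mul hscale, mul_comm]

lemma lintegral_recip_four_sub_cos_sub_cos (ha : 0 < a) (hb : 0 < b) (hab : a + b < 2) :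
    ∫⁻ s, ∫⁻ t, recip (4 - (2 * a * cos s + 2 * b * cos t)) ∂periodMeasure ∂periodMeasure
      = ENNReal.ofReal (2 * π) * ∫⁻ w, rsqrt (4 - w) * rsqrt (-kallen (a ^ 2) (b ^ 2) w) := by
  have hshift : ∀ s, ∫⁻ t, recip (4 - (2 * a * cos s + 2 * b * cos t)) ∂periodMeasure
      = ∫⁻ t, recip (4 - (2 * a * cos s + 2 * b * cos (s + t))) ∂periodMeasure := fun s => by
    rw [← lintegral_periodMeasure_comp_add (fun t => by simp) s]
    simp only [add_comm s]
  simp only [hshift]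
  rw [lintegral_lintegral_swap_of_measurable (by fun_prop)]
  simp only [lintegral_recip_four_sub_cos_phase ha hb hab]
  rw [lintegral_const_mul' _ _ ENNReal.ofReal_ne_top,
    lintegral_periodMeasure_of_even fun t => by rw [cos_neg],
    setLIntegral_comp_cos fun u => rsqrt (4 - (2 * a * b * u + (a ^ 2 + b ^ 2))),
    setLIntegral_rsqrt_one_sub_sq_eq_kallen (mul_pos ha hb) fun w => rsqrt (4 - w), ← mul_assoc,
    mul_comm 2 π, ENNReal.ofReal_mul pi_pos.le, ENNReal.ofReal_ofNat]

end Fiber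

lemma lintegral_unitWeight_recip_four_sub (x : ℝ) :
    unitWeight x * ∫⁻ s, (∫⁻ y, unitWeight y *
        ∫⁻ t, recip (4 - (2 * √x * cos s + 2 * √y * cos t)) ∂periodMeasure) ∂periodMeasure
      = ENNReal.ofReal (2 * π) *
        ∫⁻ y, ∫⁻ w, unitWeight x * unitWeight y * (rsqrt (4 - w) * rsqrt (-kallen x y w)) := by
  by_cases hx : x ∈ Ioo 0 1
  swap
  · simp [unitWeight_of_notMem hx]
  have hmeas : Measurable fun p : ℝ × ℝ => unitWeight p.2 *
      ∫⁻ t, recip (4 - (2 * √x * cos p.1 + 2 * √p.2 * cos t)) ∂periodMeasure :=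
    Measurable.mul (by fun_prop) <| measurable_lintegral_right
      (f := fun (p : ℝ × ℝ) t => recip (4 - (2 * √x * cos p.1 + 2 * √p.2 * cos t))) (by fun_prop)
  rw [lintegral_lintegral_swap_of_measurable hmeas,
    ← lintegral_const_mul' _ _ (unitWeight_ne_top x),
    ← lintegral_const_mul' _ _ ENNReal.ofReal_ne_top]
  refine lintegral_congr fun y => ?_
  by_cases hy : y ∈ Ioo 0 1
  swap
  · simp [unitWeight_of_notMem hy]
  have hsqrt_x : √x < 1 := by simpa [Real.sqrt_lt'] using hx.2
  have hsqrt_y : √y < 1 := by simpa [Real.sqrt_lt'] using hy.2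
  rw [lintegral_const_mul' _ _ (unitWeight_ne_top y),
    lintegral_recip_four_sub_cos_sub_cos (Real.sqrt_pos.mpr hx.1) (Real.sqrt_pos.mpr hy.1)
      (by linarith), Real.sq_sqrt hx.1.le, Real.sq_sqrt hy.1.le,
    lintegral_const_mul' _ _ (ENNReal.mul_ne_top (unitWeight_ne_top x) (unitWeight_ne_top y))]
  ring

lemma lintegral_recip_four_sub_cos_eq_unitKallenIntegral :
    ∫⁻ p₁, ∫⁻ p₂, ∫⁻ p₃, ∫⁻ p₄, recip (4 - (cos p₁ + cos p₂ + (cos p₃ + cos p₄)))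
        ∂periodMeasure ∂periodMeasure ∂periodMeasure ∂periodMeasure
      = ENNReal.ofReal (8 * π) * unitKallenIntegral := by
  have hinner : ∀ c, ∫⁻ p₃, ∫⁻ p₄, recip (4 - (c + (cos p₃ + cos p₄))) ∂periodMeasure ∂periodMeasure
      = 2 * ∫⁻ y, unitWeight y * ∫⁻ t, recip (4 - (c + 2 * √y * cos t)) ∂periodMeasure :=
    fun c => lintegral_cos_add_cos (G := fun u => recip (4 - (c + u))) (by fun_prop)
  have hmeas : Measurable fun c : ℝ =>
      ∫⁻ y, unitWeight y * ∫⁻ t, recip (4 - (c + 2 * √y * cos t)) ∂periodMeasure := by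
    refine measurable_lintegral_right (f := fun c y =>
      unitWeight y * ∫⁻ t, recip (4 - (c + 2 * √y * cos t)) ∂periodMeasure) ?_
    exact Measurable.mul (by fun_prop) <| measurable_lintegral_right
      (f := fun (p : ℝ × ℝ) t => recip (4 - (p.1 + 2 * √p.2 * cos t))) (by fun_prop)
  have hconst : ENNReal.ofReal (8 * π) = 2 * 2 * ENNReal.ofReal (2 * π) := by
    rw [show 8 * π = 4 * (2 * π) by ring, ENNReal.ofReal_mul (by norm_num), ENNReal.ofReal_ofNat]
    norm_num
  simp only [hinner, lintegral_const_mul' _ _ (ENNReal.ofNat_ne_top (n := 2))]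
  rw [lintegral_cos_add_cos hmeas]
  simp only [lintegral_unitWeight_recip_four_sub]
  rw [lintegral_const_mul' _ _ ENNReal.ofReal_ne_top, hconst, unitKallenIntegral]
  ring

/-- Watson's integral for the four-dimensional hypercubic lattice, as a lower Lebesgue integral. -/
noncomputable def watsonIntegral : ℝ≥0∞ :=
  ∫⁻ p₁ in Ioo 0 π, ∫⁻ p₂ in Ioo 0 π, ∫⁻ p₃ in Ioo 0 π, ∫⁻ p₄ in Ioo 0 π,
    recip (4 - (cos p₁ + cos p₂ + (cos p₃ + cos p₄)))

lemma watsonIntegral_eq_unitKallenIntegral :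
    16 * watsonIntegral = ENNReal.ofReal (8 * π) * unitKallenIntegral := by
  rw [← lintegral_recip_four_sub_cos_eq_unitKallenIntegral, watsonIntegral]
  simp only [lintegral_periodMeasure_of_even, cos_neg, implies_true,
    lintegral_const_mul' _ _ (ENNReal.ofNat_ne_top (n := 2))]
  norm_num [← mul_assoc]

lemma setLIntegral_Ioo_rsqrt_ne_top {c : ℝ} (hc : 0 ≤ c) : ∫⁻ x in Ioo 0 c, rsqrt x ≠ ∞ := by
  have hint : IntervalIntegrable (fun x : ℝ => x ^ (-(1 / 2) : ℝ)) volume 0 c :=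
    intervalIntegral.intervalIntegrable_rpow' (by norm_num)
  rw [intervalIntegrable_iff_integrableOn_Ioo_of_le hc] at hint
  convert hint.lintegral_lt_top.ne using 1
  refine setLIntegral_congr_fun measurableSet_Ioo fun x hx => ?_
  rw [rsqrt, rpow_neg hx.1.le, sqrt_eq_rpow]

lemma four_mul_sqrt_mul_le {a b c d : ℝ} (ha : 0 ≤ a) (hb : 0 ≤ b) (hc : 0 ≤ c) (hd : 0 ≤ d) :
    4 * (√a * (√b * (√c * √d))) ≤ a ^ 2 + b ^ 2 + c ^ 2 + d ^ 2 := by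
  nlinarith [sq_sqrt ha, sq_sqrt hb, sq_sqrt hc, sq_sqrt hd, sq_nonneg (a - b), sq_nonneg (c - d),
    sq_nonneg (√a * √b - √c * √d)]

lemma recip_four_sub_cos_le {a b c d : ℝ} (ha : a ∈ Ioo 0 π) (hb : b ∈ Ioo 0 π)
    (hc : c ∈ Ioo 0 π) (hd : d ∈ Ioo 0 π) :
    recip (4 - (cos a + cos b + (cos c + cos d)))
      ≤ ENNReal.ofReal (π ^ 2 / 8) * (rsqrt a * (rsqrt b * (rsqrt c * rsqrt d))) := by
  have hcos : ∀ x ∈ Ioo 0 π, cos x ≤ 1 - 2 / π ^ 2 * x ^ 2 := fun x hx =>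
    cos_le_one_sub_mul_cos_sq (by rw [abs_of_pos hx.1]; exact hx.2.le)
  have hprod : 0 < √a * (√b * (√c * √d)) := by
    have := ha.1; have := hb.1; have := hc.1; have := hd.1
    positivity
  have hamgm : 2 / π ^ 2 * (4 * (√a * (√b * (√c * √d))))
      ≤ 2 / π ^ 2 * (a ^ 2 + b ^ 2 + c ^ 2 + d ^ 2) := by
    gcongr
    exact four_mul_sqrt_mul_le ha.1.le hb.1.le hc.1.le hd.1.le
  have hlower : 8 / π ^ 2 * (√a * (√b * (√c * √d))) ≤ 4 - (cos a + cos b + (cos c + cos d)) := by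
    linear_combination hamgm + hcos a ha + hcos b hb + hcos c hc + hcos d hd
  have hinv : π ^ 2 / 8 * ((√a)⁻¹ * ((√b)⁻¹ * ((√c)⁻¹ * (√d)⁻¹)))
      = (8 / π ^ 2 * (√a * (√b * (√c * √d))))⁻¹ := by
    simp only [mul_inv, inv_div]
  unfold recip rsqrt
  rw [← ENNReal.ofReal_mul (by positivity), ← ENNReal.ofReal_mul (by positivity),
    ← ENNReal.ofReal_mul (by positivity), ← ENNReal.ofReal_mul (by positivity), hinv]
  gcongr

lemma watsonIntegral_ne_top : watsonIntegral ≠ ∞ := by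
  have hrsqrt := setLIntegral_Ioo_rsqrt_ne_top pi_pos.le
  have hbound : watsonIntegral
      ≤ ∫⁻ a in Ioo 0 π, ∫⁻ b in Ioo 0 π, ∫⁻ c in Ioo 0 π, ∫⁻ d in Ioo 0 π,
        ENNReal.ofReal (π ^ 2 / 8) * (rsqrt a * (rsqrt b * (rsqrt c * rsqrt d))) :=
    setLIntegral_mono' measurableSet_Ioo fun a ha =>
      setLIntegral_mono' measurableSet_Ioo fun b hb =>
        setLIntegral_mono' measurableSet_Ioo fun c hc =>
          setLIntegral_mono' measurableSet_Ioo fun d hd => recip_four_sub_cos_le ha hb hc hd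
  refine ne_top_of_le_ne_top ?_ hbound
  simp only [lintegral_const_mul' _ _ ENNReal.ofReal_ne_top,
    lintegral_const_mul' _ _ (rsqrt_ne_top _), lintegral_mul_const _ measurable_rsqrt]
  finiteness

/-! ### Iterated Bochner integrals of nonnegative functions -/

lemma setIntegral_eq_toReal_setLIntegral {s : Set ℝ} (hs : MeasurableSet s) {F : ℝ → ℝ≥0∞}
    {f : ℝ → ℝ} (hF : Measurable F) (hfin : ∫⁻ x in s, F x ≠ ∞)
    (hfF : ∀ x ∈ s, F x ≠ ∞ → f x = (F x).toReal) :
    ∫ x in s, f x = (∫⁻ x in s, F x).toReal := by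
  have hae := ae_lt_top hF hfin
  rw [← integral_toReal hF.aemeasurable hae]
  refine integral_congr_ae ?_
  filter_upwards [hae, ae_restrict_mem hs] with x hx hxs
  exact hfF x hxs hx.ne

lemma setIntegral₄_eq_toReal_setLIntegral₄ {s : Set ℝ} (hs : MeasurableSet s)
    {f : ℝ → ℝ → ℝ → ℝ → ℝ}
    (hf : Measurable fun p : ((ℝ × ℝ) × ℝ) × ℝ => f p.1.1.1 p.1.1.2 p.1.2 p.2)
    (hnonneg : ∀ x ∈ s, ∀ y ∈ s, ∀ z ∈ s, ∀ w ∈ s, 0 ≤ f x y z w)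
    (hfin : ∫⁻ x in s, ∫⁻ y in s, ∫⁻ z in s, ∫⁻ w in s, ENNReal.ofReal (f x y z w) ≠ ∞) :
    ∫ x in s, ∫ y in s, ∫ z in s, ∫ w in s, f x y z w
      = (∫⁻ x in s, ∫⁻ y in s, ∫⁻ z in s, ∫⁻ w in s, ENNReal.ofReal (f x y z w)).toReal := by
  have hmeas₃ : Measurable fun p : (ℝ × ℝ) × ℝ => ∫⁻ w in s, ENNReal.ofReal (f p.1.1 p.1.2 p.2 w) :=
    measurable_lintegral_right
      (f := fun (p : (ℝ × ℝ) × ℝ) w => ENNReal.ofReal (f p.1.1 p.1.2 p.2 w)) hf.ennreal_ofReal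
  have hmeas₂ : Measurable fun p : ℝ × ℝ =>
      ∫⁻ z in s, ∫⁻ w in s, ENNReal.ofReal (f p.1 p.2 z w) :=
    measurable_lintegral_right
      (f := fun (p : ℝ × ℝ) z => ∫⁻ w in s, ENNReal.ofReal (f p.1 p.2 z w)) hmeas₃
  have hmeas₁ : Measurable fun x =>
      ∫⁻ y in s, ∫⁻ z in s, ∫⁻ w in s, ENNReal.ofReal (f x y z w) :=
    measurable_lintegral_right
      (f := fun x y => ∫⁻ z in s, ∫⁻ w in s, ENNReal.ofReal (f x y z w)) hmeas₂
  refine setIntegral_eq_toReal_setLIntegral hs hmeas₁ hfin fun x hx hfin_x =>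
    setIntegral_eq_toReal_setLIntegral hs
      (hmeas₂.comp (by fun_prop : Measurable fun y : ℝ => (x, y))) hfin_x fun y hy hfin_y =>
    setIntegral_eq_toReal_setLIntegral hs
      (hmeas₃.comp (by fun_prop : Measurable fun z : ℝ => ((x, y), z))) hfin_y fun z hz hfin_z =>
    setIntegral_eq_toReal_setLIntegral hs
      (hf.comp (by fun_prop : Measurable fun w : ℝ => (((x, y), z), w))).ennreal_ofReal hfin_z
      fun w hw _ => ?_
  exact (ENNReal.toReal_ofReal (hnonneg x hx y hy z hz w hw)).symm

lemma integral_watson_eq_toReal :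
    ∫ p₁ in (0 : ℝ)..π, ∫ p₂ in (0 : ℝ)..π, ∫ p₃ in (0 : ℝ)..π, ∫ p₄ in (0 : ℝ)..π,
      1 / (4 - cos p₁ - cos p₂ - cos p₃ - cos p₄) = watsonIntegral.toReal := by
  have hwatson : watsonIntegral
      = ∫⁻ p₁ in Ioo 0 π, ∫⁻ p₂ in Ioo 0 π, ∫⁻ p₃ in Ioo 0 π, ∫⁻ p₄ in Ioo 0 π,
        ENNReal.ofReal (1 / (4 - cos p₁ - cos p₂ - cos p₃ - cos p₄)) := by
    simp only [watsonIntegral, recip, one_div, ← sub_sub]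
  simp only [intervalIntegral.integral_of_le pi_pos.le, integral_Ioc_eq_integral_Ioo]
  rw [hwatson]
  refine setIntegral₄_eq_toReal_setLIntegral₄ measurableSet_Ioo (by fun_prop)
    (fun p₁ _ p₂ _ p₃ _ p₄ _ => one_div_nonneg.mpr ?_) (hwatson ▸ watsonIntegral_ne_top)
  linarith [cos_le_one p₁, cos_le_one p₂, cos_le_one p₃, cos_le_one p₄]

/-! ### The sunrise integral as a weighted average of bubbles -/

section Rotate

variable {α β γ δ : Type*} [MeasurableSpace α] [MeasurableSpace β] [MeasurableSpace γ]
  [MeasurableSpace δ] {μ : Measure α} {ν : Measure β} {τ : Measure γ} {σ : Measure δ}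
  [SFinite μ] [SFinite ν] [SFinite τ] [SFinite σ]

lemma lintegral_rotate₃ {f : α → β → γ → ℝ≥0∞}
    (hf : Measurable fun p : α × β × γ => f p.1 p.2.1 p.2.2) :
    ∫⁻ x, ∫⁻ a, ∫⁻ b, f x a b ∂τ ∂ν ∂μ = ∫⁻ a, ∫⁻ b, ∫⁻ x, f x a b ∂μ ∂τ ∂ν :=
  (lintegral_swap_outer hf).trans <| lintegral_swap_inner (f := fun a x b => f x a b) <|
    hf.comp (by fun_prop : Measurable fun p : β × α × γ => (p.2.1, p.1, p.2.2))

lemma lintegral_rotate₄ {f : α → β → γ → δ → ℝ≥0∞}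
    (hf : Measurable fun p : α × β × γ × δ => f p.1 p.2.1 p.2.2.1 p.2.2.2) :
    ∫⁻ x, ∫⁻ a, ∫⁻ b, ∫⁻ c, f x a b c ∂σ ∂τ ∂ν ∂μ
      = ∫⁻ a, ∫⁻ b, ∫⁻ c, ∫⁻ x, f x a b c ∂μ ∂σ ∂τ ∂ν := by
  have hinner : Measurable fun p : α × β × γ => ∫⁻ c, f p.1 p.2.1 p.2.2 c ∂σ :=
    measurable_lintegral_right (f := fun (p : α × β × γ) c => f p.1 p.2.1 p.2.2 c) <|
      hf.comp (by fun_prop :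
        Measurable fun p : (α × β × γ) × δ => (p.1.1, p.1.2.1, p.1.2.2, p.2))
  rw [lintegral_swap_outer hinner]
  exact lintegral_congr fun a => lintegral_rotate₃ (f := fun x b c => f x a b c) <|
    hf.comp (by fun_prop : Measurable fun p : α × γ × δ => (p.1, a, p.2.1, p.2.2))

end Rotate

/-- Lebesgue measure on `(0, ∞)`. -/
noncomputable abbrev halfLineMeasure : Measure ℝ := volume.restrict (Ioi 0)

lemma hasDerivAt_sq_div_four_mul_one_add {z : ℝ} (hz : 0 ≤ z) :
    HasDerivAt (fun z : ℝ => z ^ 2 / (4 * (1 + z))) (z * (z + 2) / (4 * (1 + z) ^ 2)) z := by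
  have hnum : HasDerivAt (fun z : ℝ => z ^ 2) (2 * z) z := by simpa using hasDerivAt_pow 2 z
  have hden : HasDerivAt (fun z : ℝ => 4 * (1 + z)) 4 z := by
    simpa using ((hasDerivAt_id z).const_add 1).const_mul 4
  refine (hnum.div hden (by positivity)).congr_deriv ?_
  field_simp
  ring

lemma tendsto_sq_div_four_mul_one_add :
    Tendsto (fun z : ℝ => z ^ 2 / (4 * (1 + z))) atTop atTop := by
  have hlinear : Tendsto (fun z : ℝ => 1 / 4 * z - 1 / 4) atTop atTop :=
    tendsto_atTop_add_const_right _ _ (tendsto_id.const_mul_atTop (by norm_num))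
  refine tendsto_atTop_mono' _ ?_ hlinear
  filter_upwards [eventually_ge_atTop 0] with z hz
  rw [le_div_iff₀ (by positivity)]
  nlinarith

lemma setLIntegral_posWeight_mul (f : ℝ → ℝ≥0∞) :
    ∫⁻ v in Ioi 0, posWeight v * f v
      = ∫⁻ z in Ioi 0, recip (1 + z) * f (z ^ 2 / (4 * (1 + z))) := by
  rw [setLIntegral_Ioi_eq_of_deriv_pos (fun z => hasDerivAt_sq_div_four_mul_one_add) (by simp)
    (fun z hz => by positivity) tendsto_sq_div_four_mul_one_add]
  refine setLIntegral_congr_fun measurableSet_Ioi fun z (hz : 0 < z) => ?_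
  have hweight : z ^ 2 / (4 * (1 + z)) * (1 + z ^ 2 / (4 * (1 + z)))
      = (z * (z + 2) / (4 * (1 + z))) ^ 2 := by
    field_simp; ring
  rw [← mul_assoc, posWeight, ← rsqrt_mul_of_nonneg_left (by positivity), hweight,
    rsqrt_sq (by positivity), ofReal_mul_recip (by positivity), recip]
  congr 2
  field_simp

lemma setLIntegral_outerWeight_mul (f : ℝ → ℝ≥0∞) :
    ∫⁻ u in Ioi 0, outerWeight u * f u = ∫⁻ z in Ioi 0, posWeight z * f (1 + z) := by
  rw [← lintegral_eq_setLIntegral_of_forall_notMem fun u hu => by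
      rw [outerWeight_of_notMem fun h : (1 : ℝ) < u => hu (zero_lt_one.trans h), zero_mul],
    ← lintegral_eq_setLIntegral_of_forall_notMem fun z hz => by
      rw [posWeight_of_notMem hz, zero_mul],
    lintegral_comp_affine one_ne_zero 1]
  simp only [abs_one, ENNReal.ofReal_one, one_mul, outerWeight, posWeight,
    add_comm _ (1 : ℝ), add_sub_cancel_left, mul_comm (rsqrt (1 + _))]

lemma setLIntegral_recip_mul_of_inv_invariant {f : ℝ → ℝ≥0∞}
    (hf : ∀ p, 0 < p → f p⁻¹ = f p) :
    ∫⁻ p in Ioi 0, recip p * f p = 2 * ∫⁻ z in Ioi 0, recip (1 + z) * f (1 + z) := by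
  have hinv : ∫⁻ p in Ioo 0 1, recip p * f p = ∫⁻ p in Ioi 1, recip p * f p := by
    rw [setLIntegral_comp_mobius (a := 1) (b := 0) (c := 0) (d := 1) (s := Ioi 1) (by norm_num)
      measurableSet_Ioi (fun p (hp : 1 < p) => by simpa using ⟨by positivity, by positivity,
        inv_lt_one_of_one_lt₀ hp⟩)
      (fun p hp => by simpa using ⟨hp.1.ne', (one_lt_inv₀ hp.1).mpr hp.2⟩)]
    refine setLIntegral_congr_fun measurableSet_Ioi fun p (hp : 1 < p) => ?_
    have hp₀ : 0 < p := zero_lt_one.trans hp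
    have harg : (1 + 0 * p) / (0 + 1 * p) = p⁻¹ := by field_simp; ring
    rw [harg, hf p hp₀, ← mul_assoc, ofReal_mul_recip (by positivity), recip]
    congr 2
    field_simp
    norm_num
  have hshift : ∫⁻ p in Ioi 1, recip p * f p = ∫⁻ z in Ioi 0, recip (1 + z) * f (1 + z) := by
    rw [setLIntegral_comp_mobius (a := 1) (b := 1) (c := 1) (d := 0) (s := Ioi 0) (by norm_num)
      measurableSet_Ioi (fun z hz => by simpa using hz) (fun p hp => by simpa using hp)]
    simp
  have hdisj : Disjoint (Ioc (0 : ℝ) 1) (Ioi 1) :=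
    Set.disjoint_left.mpr fun p hp hp' => hp.2.not_gt hp'
  rw [← Ioc_union_Ioi_eq_Ioi zero_le_one, lintegral_union measurableSet_Ioi hdisj,
    ← setLIntegral_congr Ioo_ae_eq_Ioc, hinv, hshift, two_mul, Ioc_union_Ioi_eq_Ioi zero_le_one]

lemma setLIntegral_recip_mul_comp_one_add_sq_div (f : ℝ → ℝ≥0∞) :
    ∫⁻ p in Ioi 0, recip p * f ((1 + p) ^ 2 / (4 * p))
      = 2 * ∫⁻ u in Ioi 0, outerWeight u * f u := by
  rw [setLIntegral_outerWeight_mul, setLIntegral_posWeight_mul fun u => f (1 + u),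
    setLIntegral_recip_mul_of_inv_invariant (f := fun p => f ((1 + p) ^ 2 / (4 * p)))]
  · congr 1
    refine setLIntegral_congr_fun measurableSet_Ioi fun z (hz : 0 < z) => ?_
    have harg : (1 + (1 + z)) ^ 2 / (4 * (1 + z)) = 1 + z ^ 2 / (4 * (1 + z)) := by
      field_simp; ring
    rw [harg]
  · intro p hp
    congr 1
    field_simp
    ring

/-- The sunrise integral in Schwinger parameters, as a lower Lebesgue integral. -/
noncomputable def sunriseIntegral : ℝ≥0∞ :=
  ∫⁻ x₁ in Ioi 0, ∫⁻ x₂ in Ioi 0, ∫⁻ x₃ in Ioi 0, ∫⁻ x₄ in Ioi 0,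
    ENNReal.ofReal (1 / (x₁ * x₂ * x₃ * x₄ *
      ((1 + (x₁ + x₂ + x₃ + x₄)) * (1 + (1 / x₁ + 1 / x₂ + 1 / x₃ + 1 / x₄)) - 1)))

/-- The bubble with squared momentum `V` and squared masses `H` and `K`, reduced to a
one-dimensional integral; see `lintegral_rsqrt_neg_kallen_mul_recip_mul_recip` for its dispersive
representation. -/
noncomputable def bubbleIntegral (V H K : ℝ) : ℝ≥0∞ :=
  ∫⁻ s in Ioi 0, recip (s ^ 2 + s * (V + H + K) + H * K)

lemma sunriseIntegral_eq_lintegral_ratios :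
    sunriseIntegral = ∫⁻ a, ∫⁻ b, ∫⁻ c, ∫⁻ x, recip (a * b * c) *
      recip ((1 + (a + b + c)) * x ^ 2 +
        (1 + (a + b + c)) * (1 + (1 / a + 1 / b + 1 / c)) * x + (1 + (1 / a + 1 / b + 1 / c)))
      ∂halfLineMeasure ∂halfLineMeasure ∂halfLineMeasure ∂halfLineMeasure := by
  rw [← lintegral_rotate₄ (f := fun x a b c => recip (a * b * c) *
      recip ((1 + (a + b + c)) * x ^ 2 + (1 + (a + b + c)) * (1 + (1 / a + 1 / b + 1 / c)) * x +
        (1 + (1 / a + 1 / b + 1 / c)))) (by fun_prop)]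
  refine setLIntegral_congr_fun measurableSet_Ioi fun x (hx : 0 < x) => ?_
  rw [setLIntegral_Ioi_comp_mul_left hx]
  rw [← lintegral_const_mul' _ _ ENNReal.ofReal_ne_top]
  refine setLIntegral_congr_fun measurableSet_Ioi fun a (ha : 0 < a) => ?_
  rw [setLIntegral_Ioi_comp_mul_left hx]
  iterate 2 rw [← lintegral_const_mul' _ _ ENNReal.ofReal_ne_top]
  refine setLIntegral_congr_fun measurableSet_Ioi fun b (hb : 0 < b) => ?_
  rw [setLIntegral_Ioi_comp_mul_left hx]
  iterate 3 rw [← lintegral_const_mul' _ _ ENNReal.ofReal_ne_top]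
  refine setLIntegral_congr_fun measurableSet_Ioi fun c (hc : 0 < c) => ?_
  have hden : x * (x * a) * (x * b) * (x * c) * ((1 + (x + x * a + x * b + x * c)) *
        (1 + (1 / x + 1 / (x * a) + 1 / (x * b) + 1 / (x * c))) - 1)
      = x ^ 3 * (a * b * c * ((1 + (a + b + c)) * x ^ 2 +
        (1 + (a + b + c)) * (1 + (1 / a + 1 / b + 1 / c)) * x +
        (1 + (1 / a + 1 / b + 1 / c)))) := by
    field_simp; ring
  rw [← ENNReal.ofReal_mul hx.le, ← ENNReal.ofReal_mul hx.le, ← ENNReal.ofReal_mul hx.le,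
    ← recip_mul (by positivity), hden, one_div, mul_inv (x ^ 3), recip]
  congr 1
  rw [← mul_assoc, ← mul_assoc, ← mul_assoc]
  convert one_mul _ using 2
  field_simp

lemma setLIntegral_Ioi_recip_quadratic {X Y : ℝ} (hX : 0 < X) (hY : 0 < Y) :
    ∫⁻ x in Ioi 0, recip (X * x ^ 2 + X * Y * x + Y)
      = ∫⁻ v in Ioi 0, posWeight v * recip (X * Y + 4 * v) := by
  rw [setLIntegral_posWeight_mul fun v => recip (X * Y + 4 * v),
    setLIntegral_Ioi_comp_mul_left (inv_pos.mpr hX),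
    ← lintegral_const_mul' _ _ ENNReal.ofReal_ne_top]
  refine setLIntegral_congr_fun measurableSet_Ioi fun z (hz : 0 < z) => ?_
  rw [ofReal_mul_recip (by positivity), ← recip_mul (by positivity), recip]
  congr 1
  field_simp
  ring

lemma setLIntegral_recip_mul_recip_eq_bubbleIntegral {V p r : ℝ} (hV : 0 < V) (hp : 0 < p)
    (hr : 0 < r) :
    ∫⁻ b in Ioi 0,
        recip b * recip ((1 + (p + b + b * r)) * (1 + (1 / p + 1 / b + 1 / (b * r))) + 4 * V)
      = ENNReal.ofReal (1 / 4) *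
        bubbleIntegral V ((1 + p) ^ 2 / (4 * p)) ((1 + r) ^ 2 / (4 * r)) := by
  set k := 4 * p / ((1 + p) * (1 + r)) with hk
  have hk₀ : 0 < k := by positivity
  rw [bubbleIntegral, setLIntegral_Ioi_comp_mul_left hk₀,
    ← lintegral_const_mul' _ _ ENNReal.ofReal_ne_top,
    ← lintegral_const_mul' _ _ ENNReal.ofReal_ne_top]
  refine setLIntegral_congr_fun measurableSet_Ioi fun z (hz : 0 < z) => ?_
  set D := (1 + (p + k * z + k * z * r)) * (1 + (1 / p + 1 / (k * z) + 1 / (k * z * r))) + 4 * V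
    with hD
  have hD₀ : 0 < D := by positivity
  have hform : 4 * (z ^ 2 + z * (V + (1 + p) ^ 2 / (4 * p) + (1 + r) ^ 2 / (4 * r)) +
      (1 + p) ^ 2 / (4 * p) * ((1 + r) ^ 2 / (4 * r))) = z * D := by
    rw [hD, hk]
    field_simp
    ring
  rw [ofReal_mul_recip (by positivity), ← recip_mul (by positivity),
    ofReal_mul_recip hk₀.le, div_div (1 : ℝ) 4, hform]
  congr 1
  field_simp

lemma setLIntegral_setLIntegral_recip_eq_bubbleIntegral {V p : ℝ} (hV : 0 < V) (hp : 0 < p) :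
    ∫⁻ b, ∫⁻ c, recip (p * b * c) *
        recip ((1 + (p + b + c)) * (1 + (1 / p + 1 / b + 1 / c)) + 4 * V)
        ∂halfLineMeasure ∂halfLineMeasure
      = recip p * ∫⁻ K, outerWeight K *
        (ENNReal.ofReal (1 / 2) * bubbleIntegral V ((1 + p) ^ 2 / (4 * p)) K)
        ∂halfLineMeasure := by
  have hscale : ∀ b ∈ Ioi (0 : ℝ), ∫⁻ c, recip (p * b * c) *
        recip ((1 + (p + b + c)) * (1 + (1 / p + 1 / b + 1 / c)) + 4 * V) ∂halfLineMeasure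
      = ∫⁻ r, recip p * recip r * (recip b *
        recip ((1 + (p + b + b * r)) * (1 + (1 / p + 1 / b + 1 / (b * r))) + 4 * V))
        ∂halfLineMeasure := fun b (hb : 0 < b) => by
    rw [setLIntegral_Ioi_comp_mul_left hb, ← lintegral_const_mul' _ _ ENNReal.ofReal_ne_top]
    refine lintegral_congr fun r => ?_
    rw [recip_mul (by positivity), recip_mul hp.le, recip_mul hb.le]
    have hcancel (D : ℝ≥0∞) : ENNReal.ofReal b * (recip p * recip b * (recip b * recip r) * D)
        = recip p * recip r * (recip b * D) :=
      calc _ = ENNReal.ofReal b * recip b * (recip p * recip r * (recip b * D)) := by ring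
        _ = _ := by rw [ofReal_mul_recip_self hb, one_mul]
    exact hcancel _
  have hbubble : ∀ r ∈ Ioi (0 : ℝ), ∫⁻ b, recip p * recip r * (recip b *
        recip ((1 + (p + b + b * r)) * (1 + (1 / p + 1 / b + 1 / (b * r))) + 4 * V))
        ∂halfLineMeasure
      = recip p * (recip r * (ENNReal.ofReal (1 / 4) *
        bubbleIntegral V ((1 + p) ^ 2 / (4 * p)) ((1 + r) ^ 2 / (4 * r)))) := fun r hr => by
    rw [lintegral_const_mul' _ _ (ENNReal.mul_ne_top (recip_ne_top _) (recip_ne_top _)),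
      setLIntegral_recip_mul_recip_eq_bubbleIntegral hV hp hr, mul_assoc]
  have hhalf : ENNReal.ofReal (1 / 2) = 2 * ENNReal.ofReal (1 / 4) := by
    rw [← ENNReal.ofReal_ofNat 2, ← ENNReal.ofReal_mul two_pos.le]; norm_num
  rw [setLIntegral_congr_fun measurableSet_Ioi hscale,
    lintegral_lintegral_swap_of_measurable (by fun_prop),
    setLIntegral_congr_fun measurableSet_Ioi hbubble, lintegral_const_mul' _ _ (recip_ne_top _),
    setLIntegral_recip_mul_comp_one_add_sq_div fun K =>
      ENNReal.ofReal (1 / 4) * bubbleIntegral V ((1 + p) ^ 2 / (4 * p)) K,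
    ← lintegral_const_mul' _ _ (ENNReal.ofNat_ne_top (n := 2)), hhalf]
  simp only [mul_assoc, mul_left_comm (2 : ℝ≥0∞)]

lemma sunriseIntegral_eq_lintegral_bubbleIntegral :
    sunriseIntegral = ∫⁻ V, posWeight V * ∫⁻ H, outerWeight H * ∫⁻ K, outerWeight K *
      bubbleIntegral V H K ∂halfLineMeasure ∂halfLineMeasure ∂halfLineMeasure := by
  have hratios : sunriseIntegral = ∫⁻ a, ∫⁻ b, ∫⁻ c, ∫⁻ V, posWeight V * (recip (a * b * c) *
      recip ((1 + (a + b + c)) * (1 + (1 / a + 1 / b + 1 / c)) + 4 * V))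
      ∂halfLineMeasure ∂halfLineMeasure ∂halfLineMeasure ∂halfLineMeasure := by
    rw [sunriseIntegral_eq_lintegral_ratios]
    refine setLIntegral_congr_fun measurableSet_Ioi fun a (ha : 0 < a) =>
      setLIntegral_congr_fun measurableSet_Ioi fun b (hb : 0 < b) =>
      setLIntegral_congr_fun measurableSet_Ioi fun c (hc : 0 < c) => ?_
    simp only [mul_left_comm (posWeight _)]
    rw [lintegral_const_mul' _ _ (recip_ne_top _), lintegral_const_mul' _ _ (recip_ne_top _),
      setLIntegral_Ioi_recip_quadratic (by positivity) (by positivity)]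
  have htwo : 2 * ENNReal.ofReal (1 / 2) = 1 := by
    rw [← ENNReal.ofReal_ofNat 2, ← ENNReal.ofReal_mul two_pos.le]; norm_num
  rw [hratios, ← lintegral_rotate₄ (f := fun V a b c => posWeight V * (recip (a * b * c) *
      recip ((1 + (a + b + c)) * (1 + (1 / a + 1 / b + 1 / c)) + 4 * V))) (by fun_prop)]
  refine setLIntegral_congr_fun measurableSet_Ioi fun V (hV : 0 < V) => ?_
  simp only [lintegral_const_mul' _ _ (posWeight_ne_top V)]
  rw [setLIntegral_congr_fun measurableSet_Ioi fun p hp =>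
      setLIntegral_setLIntegral_recip_eq_bubbleIntegral hV hp,
    setLIntegral_recip_mul_comp_one_add_sq_div fun H => ∫⁻ K, outerWeight K *
      (ENNReal.ofReal (1 / 2) * bubbleIntegral V H K) ∂halfLineMeasure,
    ← lintegral_const_mul' _ _ (ENNReal.ofNat_ne_top (n := 2))]
  congr 1
  refine lintegral_congr fun H => ?_
  simp only [mul_left_comm _ (ENNReal.ofReal (1 / 2)),
    lintegral_const_mul' _ _ (ENNReal.ofReal_ne_top (r := 1 / 2))]
  rw [← mul_assoc, mul_comm _ 2, htwo, one_mul]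

lemma setLIntegral_rsqrt_neg_kallen_mul_recip {X V K : ℝ} (hX : 0 < X) (hV : 0 < V) (hK : 0 < K) :
    ∫⁻ Y in Ioi 0, rsqrt (-kallen X Y V) * recip (Y + K)
      = ENNReal.ofReal π * rsqrt ((K + X + V) ^ 2 - 4 * X * V) := by
  obtain ⟨x, hx, rfl⟩ : ∃ x, 0 < x ∧ x ^ 2 = X := ⟨√X, Real.sqrt_pos.mpr hX, Real.sq_sqrt hX.le⟩
  obtain ⟨v, hv, rfl⟩ : ∃ v, 0 < v ∧ v ^ 2 = V := ⟨√V, Real.sqrt_pos.mpr hV, Real.sq_sqrt hV.le⟩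
  have hxv : 0 < x * v := mul_pos hx hv
  have harcsine := setLIntegral_Ioo_rsqrt_mul_recip (p := (v - x) ^ 2) (q := (v + x) ^ 2)
    (a₀ := K) (a₁ := 1) (by linarith) (by positivity) (by positivity)
  have hkallen : ∀ Y, -kallen (x ^ 2) Y (v ^ 2) = (Y - (v - x) ^ 2) * ((v + x) ^ 2 - Y) :=
    fun Y => by rw [kallen_right_comm, kallen_sq_sq]; ring
  have hdisc : (K + x ^ 2 + v ^ 2) ^ 2 - 4 * x ^ 2 * v ^ 2
      = (K + 1 * (v - x) ^ 2) * (K + 1 * (v + x) ^ 2) := by ring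
  rw [setLIntegral_eq_of_subset_of_forall_notMem (s := Ioo ((v - x) ^ 2) ((v + x) ^ 2))
    measurableSet_Ioo measurableSet_Ioi fun Y hY => (sq_nonneg _).trans_lt hY.1]
  · rw [hdisc, ← harcsine]
    simp only [hkallen, one_mul, add_comm K]
  · intro Y _ hY
    have hnonneg := kallen_sq_sq_nonneg_of_notMem hY hxv.le
    rw [kallen_right_comm, rsqrt_of_nonpos (neg_nonpos.mpr hnonneg), zero_mul]

lemma setLIntegral_recip_mul_rsqrt_eq_bubbleIntegral {V H K : ℝ} (hV : 0 < V) (hH : 0 < H)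
    (hK : 0 < K) :
    ∫⁻ X in Ioi 0, recip (X + H) * rsqrt ((K + X + V) ^ 2 - 4 * X * V)
      = bubbleIntegral V H K := by
  have hderiv : ∀ s, 0 ≤ s → HasDerivAt (fun s => s + V * s / (K + s))
      (1 + V * K / (K + s) ^ 2) s := fun s hs => by
    have hnum : HasDerivAt (fun z : ℝ => V * z) V s := by
      simpa using (hasDerivAt_id s).const_mul V
    refine ((hasDerivAt_id s).add (hnum.div ((hasDerivAt_id s).const_add K)
      (by simp only [id_eq]; positivity))).congr_deriv ?_
    simp only [id_eq]
    field_simp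
    ring
  have htop : Tendsto (fun s => s + V * s / (K + s)) atTop atTop := by
    refine tendsto_atTop_mono' _ ?_ tendsto_id
    filter_upwards [eventually_ge_atTop 0] with s hs
    exact le_add_of_nonneg_right (by positivity)
  rw [bubbleIntegral, setLIntegral_Ioi_eq_of_deriv_pos hderiv (by simp)
    (fun s hs => by positivity) htop]
  refine setLIntegral_congr_fun measurableSet_Ioi fun s (hs : 0 < s) => ?_
  set D := 1 + V * K / (K + s) ^ 2 with hD
  set X := s + V * s / (K + s) with hX
  have hD₀ : 0 < D := by positivity
  have hX₀ : 0 < X := by positivity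
  have hdisc : (K + X + V) ^ 2 - 4 * X * V = ((K + s) * D) ^ 2 := by
    rw [hX, hD]; field_simp; ring
  have hden : s ^ 2 + s * (V + H + K) + H * K = (X + H) * (K + s) := by
    rw [hX]; field_simp; ring
  rw [hdisc, hden, rsqrt_sq (by positivity), ← recip_mul (by positivity),
    ofReal_mul_recip hD₀.le, recip]
  congr 1
  field_simp

lemma lintegral_rsqrt_neg_kallen_mul_recip_mul_recip {V H K : ℝ} (hV : 0 < V) (hH : 0 < H)
    (hK : 0 < K) :
    ∫⁻ X, ∫⁻ Y, rsqrt (-kallen X Y V) * (recip (X + H) * recip (Y + K))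
        ∂halfLineMeasure ∂halfLineMeasure
      = ENNReal.ofReal π * bubbleIntegral V H K := by
  rw [← setLIntegral_recip_mul_rsqrt_eq_bubbleIntegral hV hH hK,
    ← lintegral_const_mul' _ _ ENNReal.ofReal_ne_top]
  refine setLIntegral_congr_fun measurableSet_Ioi fun X hX => ?_
  simp only [mul_left_comm _ (recip (X + H))]
  rw [lintegral_const_mul' _ _ (recip_ne_top _),
    setLIntegral_rsqrt_neg_kallen_mul_recip hX hV hK]

/-! ### Stieltjes transforms -/

/-- The kernel `1 / (X + a)` of the Stieltjes transform. -/
noncomputable def stieltjesKernel (a X : ℝ) : ℝ≥0∞ := recip (X + a)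

/-- The kernel `√a / (√X (X + a))`. For `a` and `X` positive it is the imaginary part of
`1 / (√X (√X - i √a))`, whose real part is `stieltjesKernel a X`. -/
noncomputable def conjStieltjesKernel (a X : ℝ) : ℝ≥0∞ :=
  ENNReal.ofReal √a * rsqrt X * recip (X + a)

section KernelMeasurability

variable {α : Type*} [MeasurableSpace α] {f g : α → ℝ}

@[fun_prop] lemma measurable_stieltjesKernel (hf : Measurable f) (hg : Measurable g) :
    Measurable fun x => stieltjesKernel (f x) (g x) := by
  unfold stieltjesKernel; fun_prop

@[fun_prop] lemma measurable_conjStieltjesKernel (hf : Measurable f) (hg : Measurable g) :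
    Measurable fun x => conjStieltjesKernel (f x) (g x) := by
  unfold conjStieltjesKernel; fun_prop

end KernelMeasurability

/-- The Stieltjes transform of the measure on `(0, ∞)` with density `w`. -/
noncomputable def stieltjesTransform (w : ℝ → ℝ≥0∞) (X : ℝ) : ℝ≥0∞ :=
  ∫⁻ a, w a * stieltjesKernel a X ∂halfLineMeasure

/-- The analogue of `stieltjesTransform` for the conjugate kernel. -/
noncomputable def conjStieltjesTransform (w : ℝ → ℝ≥0∞) (X : ℝ) : ℝ≥0∞ :=
  ∫⁻ a, w a * conjStieltjesKernel a X ∂halfLineMeasure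

@[fun_prop] lemma measurable_stieltjesTransform {w : ℝ → ℝ≥0∞} (hw : Measurable w) :
    Measurable (stieltjesTransform w) :=
  measurable_lintegral_right (f := fun X a => w a * stieltjesKernel a X) (by fun_prop)

@[fun_prop] lemma measurable_conjStieltjesTransform {w : ℝ → ℝ≥0∞} (hw : Measurable w) :
    Measurable (conjStieltjesTransform w) :=
  measurable_lintegral_right (f := fun X a => w a * conjStieltjesKernel a X) (by fun_prop)

lemma conjStieltjesTransform_outerWeight {V : ℝ} (hV : 0 < V) :
    conjStieltjesTransform outerWeight V = ENNReal.ofReal π * posWeight V := by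
  have hintegral := setLIntegral_Ioi_rsqrt_mul_recip (a := V + 1) (b := 1) (by linarith) one_pos
  rw [mul_one] at hintegral
  calc conjStieltjesTransform outerWeight V
    _ = ∫⁻ U in Ioi 0, posWeight U * conjStieltjesKernel (1 + U) V :=
      setLIntegral_outerWeight_mul fun a => conjStieltjesKernel a V
    _ = ∫⁻ U in Ioi 0, rsqrt V * (rsqrt U * recip (V + 1 + 1 * U)) := by
      refine setLIntegral_congr_fun measurableSet_Ioi fun U (hU : 0 < U) => ?_
      have hcancel : ENNReal.ofReal √(1 + U) * rsqrt (1 + U) = 1 :=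
        ofReal_mul_recip_self (a := √(1 + U)) (by positivity)
      rw [posWeight, conjStieltjesKernel, one_mul, ← add_assoc]
      calc _ = ENNReal.ofReal √(1 + U) * rsqrt (1 + U) *
              (rsqrt V * (rsqrt U * recip (V + 1 + U))) := by ring
        _ = _ := by rw [hcancel, one_mul]
    _ = ENNReal.ofReal π * posWeight V := by
      rw [lintegral_const_mul' _ _ (rsqrt_ne_top V), hintegral, posWeight, add_comm V]
      ring

/-- The triple integral of `Q / √(-kallen)` over the positive octant. -/
noncomputable def kallenIntegral (Q : ℝ → ℝ → ℝ → ℝ≥0∞) : ℝ≥0∞ :=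
  ∫⁻ V, ∫⁻ X, ∫⁻ Y, rsqrt (-kallen X Y V) * Q X Y V
    ∂halfLineMeasure ∂halfLineMeasure ∂halfLineMeasure

section KallenIntegral

variable {Q : ℝ → ℝ → ℝ → ℝ≥0∞}

lemma measurable_rsqrt_neg_kallen_mul (hQ : Measurable fun p : ℝ × ℝ × ℝ => Q p.1 p.2.1 p.2.2) :
    Measurable fun p : ℝ × ℝ × ℝ =>
      rsqrt (-kallen p.2.1 p.2.2 p.1) * Q p.2.1 p.2.2 p.1 := by
  have hQ' : Measurable fun p : ℝ × ℝ × ℝ => Q p.2.1 p.2.2 p.1 :=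
    hQ.comp (by fun_prop : Measurable fun p : ℝ × ℝ × ℝ => (p.2.1, p.2.2, p.1))
  exact Measurable.mul (by fun_prop) hQ'

lemma kallenIntegral_add (hQ : Measurable fun p : ℝ × ℝ × ℝ => Q p.1 p.2.1 p.2.2)
    (R : ℝ → ℝ → ℝ → ℝ≥0∞) :
    kallenIntegral (fun X Y V => Q X Y V + R X Y V) = kallenIntegral Q + kallenIntegral R := by
  simp only [kallenIntegral, mul_add]
  exact lintegral_lintegral_lintegral_add (measurable_rsqrt_neg_kallen_mul hQ)

lemma kallenIntegral_swap_left (hQ : Measurable fun p : ℝ × ℝ × ℝ => Q p.1 p.2.1 p.2.2) :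
    kallenIntegral (fun X Y V => Q Y X V) = kallenIntegral Q := by
  rw [eq_comm, kallenIntegral, lintegral_swap_inner (measurable_rsqrt_neg_kallen_mul hQ)]
  refine lintegral_congr fun V => lintegral_congr fun X => lintegral_congr fun Y => ?_
  rw [kallen_comm]

lemma kallenIntegral_swap_outer (hQ : Measurable fun p : ℝ × ℝ × ℝ => Q p.1 p.2.1 p.2.2) :
    kallenIntegral (fun X Y V => Q V Y X) = kallenIntegral Q := by
  rw [eq_comm, kallenIntegral, lintegral_swap_outer (measurable_rsqrt_neg_kallen_mul hQ)]
  refine lintegral_congr fun V => lintegral_congr fun X => lintegral_congr fun Y => ?_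
  rw [kallen_comm V, kallen_right_comm, kallen_comm]

lemma kallenIntegral_eq_lintegral_rays
    (hQ : Measurable fun p : ℝ × ℝ × ℝ => Q p.1 p.2.1 p.2.2) :
    kallenIntegral Q = ∫⁻ m, ∫⁻ n, rsqrt (-kallen m n 1) *
      ∫⁻ V, ENNReal.ofReal V * Q (m * V) (n * V) V
        ∂halfLineMeasure ∂halfLineMeasure ∂halfLineMeasure := by
  have hscale : ∀ V ∈ Ioi (0 : ℝ),
      ∫⁻ X, ∫⁻ Y, rsqrt (-kallen X Y V) * Q X Y V ∂halfLineMeasure ∂halfLineMeasure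
        = ∫⁻ m, ∫⁻ n, rsqrt (-kallen m n 1) * (ENNReal.ofReal V * Q (m * V) (n * V) V)
          ∂halfLineMeasure ∂halfLineMeasure := fun V (hV : 0 < V) => by
    rw [setLIntegral_Ioi_comp_mul_left hV, ← lintegral_const_mul' _ _ ENNReal.ofReal_ne_top]
    refine lintegral_congr fun m => ?_
    rw [setLIntegral_Ioi_comp_mul_left hV]
    simp only [← lintegral_const_mul' _ _ ENNReal.ofReal_ne_top]
    refine lintegral_congr fun n => ?_
    have hhomogeneous : -kallen (V * m) (V * n) V = V ^ 2 * -kallen m n 1 := by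
      unfold kallen; ring
    rw [hhomogeneous, rsqrt_mul_of_nonneg_left (by positivity), rsqrt_sq hV.le, mul_comm V m,
      mul_comm V n]
    calc _ = ENNReal.ofReal V * recip V *
            (rsqrt (-kallen m n 1) * (ENNReal.ofReal V * Q (m * V) (n * V) V)) := by ring
      _ = _ := by rw [ofReal_mul_recip_self hV, one_mul]
  have hQ' : Measurable fun p : ℝ × ℝ × ℝ => Q (p.2.1 * p.1) (p.2.2 * p.1) p.1 :=
    hQ.comp (by fun_prop : Measurable fun p : ℝ × ℝ × ℝ => (p.2.1 * p.1, p.2.2 * p.1, p.1))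
  rw [kallenIntegral, setLIntegral_congr_fun measurableSet_Ioi hscale,
    lintegral_rotate₃ (Measurable.mul (by fun_prop) (Measurable.mul (by fun_prop) hQ'))]
  simp only [lintegral_const_mul' _ _ (rsqrt_ne_top _)]

lemma kallenIntegral_congr_of_rays {R : ℝ → ℝ → ℝ → ℝ≥0∞}
    (hQ : Measurable fun p : ℝ × ℝ × ℝ => Q p.1 p.2.1 p.2.2)
    (hR : Measurable fun p : ℝ × ℝ × ℝ => R p.1 p.2.1 p.2.2)
    (hrays : ∀ m n : ℝ, 0 < m → 0 < n →
      ∫⁻ V in Ioi 0, ENNReal.ofReal V * Q (m * V) (n * V) V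
        = ∫⁻ V in Ioi 0, ENNReal.ofReal V * R (m * V) (n * V) V) :
    kallenIntegral Q = kallenIntegral R := by
  rw [kallenIntegral_eq_lintegral_rays hQ, kallenIntegral_eq_lintegral_rays hR]
  refine setLIntegral_congr_fun measurableSet_Ioi fun m hm =>
    setLIntegral_congr_fun measurableSet_Ioi fun n hn => ?_
  rw [hrays m n hm hn]

end KallenIntegral

lemma lintegral_rsqrt_neg_kallen_mul_stieltjesTransform {w : ℝ → ℝ≥0∞} (hw : Measurable w)
    (hw_top : ∀ a, w a ≠ ∞) {V : ℝ} (hV : 0 < V) :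
    ∫⁻ X, ∫⁻ Y, rsqrt (-kallen X Y V) * (stieltjesTransform w X * stieltjesTransform w Y)
        ∂halfLineMeasure ∂halfLineMeasure
      = ENNReal.ofReal π * ∫⁻ H, w H * ∫⁻ K, w K * bubbleIntegral V H K
        ∂halfLineMeasure ∂halfLineMeasure := by
  set F : ℝ → ℝ → ℝ → ℝ → ℝ≥0∞ := fun X Y H K =>
    w H * (w K * (rsqrt (-kallen X Y V) * (recip (X + H) * recip (Y + K)))) with hF
  have hexpand : ∀ X Y : ℝ,
      rsqrt (-kallen X Y V) * (stieltjesTransform w X * stieltjesTransform w Y)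
        = ∫⁻ H, ∫⁻ K, F X Y H K ∂halfLineMeasure ∂halfLineMeasure := fun X Y => by
    simp only [stieltjesTransform, stieltjesKernel]
    rw [← lintegral_mul_const _ (by fun_prop), ← lintegral_const_mul _ (by fun_prop)]
    refine lintegral_congr fun H => ?_
    rw [← lintegral_const_mul _ (by fun_prop), ← lintegral_const_mul _ (by fun_prop)]
    exact lintegral_congr fun K => by rw [hF]; ring
  simp only [hexpand]
  rw [lintegral_rotate₄ (by fun_prop), lintegral_rotate₄ (f := fun Y H K X => F X Y H K)
    (by fun_prop), ← lintegral_const_mul' _ _ ENNReal.ofReal_ne_top]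
  refine setLIntegral_congr_fun measurableSet_Ioi fun H hH => ?_
  rw [mul_left_comm, ← lintegral_const_mul' _ _ ENNReal.ofReal_ne_top,
    ← lintegral_const_mul' _ _ (hw_top H)]
  refine setLIntegral_congr_fun measurableSet_Ioi fun K hK => ?_
  simp only [hF, lintegral_const_mul' _ _ (hw_top _)]
  rw [lintegral_rsqrt_neg_kallen_mul_recip_mul_recip hV hH hK, mul_left_comm (w K)]

lemma kallenIntegral_eq_sunriseIntegral :
    kallenIntegral (fun X Y V => stieltjesTransform outerWeight X *
        stieltjesTransform outerWeight Y * conjStieltjesTransform outerWeight V)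
      = ENNReal.ofReal (π ^ 2) * sunriseIntegral := by
  rw [sunriseIntegral_eq_lintegral_bubbleIntegral,
    ← lintegral_const_mul' _ _ ENNReal.ofReal_ne_top]
  refine setLIntegral_congr_fun measurableSet_Ioi fun V (hV : 0 < V) => ?_
  have hweight_top : ENNReal.ofReal π * posWeight V ≠ ∞ :=
    ENNReal.mul_ne_top ENNReal.ofReal_ne_top (posWeight_ne_top V)
  simp only [conjStieltjesTransform_outerWeight hV, mul_comm _ (ENNReal.ofReal π * posWeight V),
    mul_left_comm _ (ENNReal.ofReal π * posWeight V), lintegral_const_mul' _ _ hweight_top]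
  rw [lintegral_rsqrt_neg_kallen_mul_stieltjesTransform measurable_outerWeight outerWeight_ne_top
    hV, ENNReal.ofReal_pow pi_pos.le]
  ring

lemma kallenIntegral_eq_posKallenIntegral :
    kallenIntegral (fun X Y V => conjStieltjesTransform outerWeight X *
        conjStieltjesTransform outerWeight Y * conjStieltjesTransform outerWeight V)
      = ENNReal.ofReal (π ^ 3) * posKallenIntegral := by
  have hsupport {f : ℝ → ℝ≥0∞} (hf : ∀ x ∉ Ioi 0, f x = 0) :
      ∫⁻ x, f x = ∫⁻ x, f x ∂halfLineMeasure :=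
    lintegral_eq_setLIntegral_of_forall_notMem hf
  rw [posKallenIntegral, hsupport fun V hV => by simp [posWeight_of_notMem hV],
    ← lintegral_const_mul' _ _ ENNReal.ofReal_ne_top]
  refine setLIntegral_congr_fun measurableSet_Ioi fun V hV => ?_
  rw [hsupport fun X hX => by simp [posWeight_of_notMem hX],
    ← lintegral_const_mul' _ _ ENNReal.ofReal_ne_top]
  refine setLIntegral_congr_fun measurableSet_Ioi fun X hX => ?_
  rw [hsupport fun Y hY => by simp [posWeight_of_notMem hY],
    ← lintegral_const_mul' _ _ ENNReal.ofReal_ne_top]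
  refine setLIntegral_congr_fun measurableSet_Ioi fun Y hY => ?_
  beta_reduce
  rw [conjStieltjesTransform_outerWeight hV, conjStieltjesTransform_outerWeight hX,
    conjStieltjesTransform_outerWeight hY, ENNReal.ofReal_pow pi_pos.le]
  ring

/-! ### The three-term identity -/

lemma setLIntegral_mul_recip_add {F : ℝ → ℝ≥0∞} (hF : Measurable F) {d : ℝ} (hd : 0 < d) :
    (∫⁻ V in Ioi 0, ENNReal.ofReal V * (F V * recip (V + d)))
      + ENNReal.ofReal d * ∫⁻ V in Ioi 0, F V * recip (V + d) = ∫⁻ V in Ioi 0, F V := by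
  rw [← lintegral_const_mul' _ _ ENNReal.ofReal_ne_top, ← lintegral_add_left (by fun_prop)]
  refine setLIntegral_congr_fun measurableSet_Ioi fun V (hV : 0 < V) => ?_
  rw [← add_mul, ← ENNReal.ofReal_add hV.le hd.le, mul_left_comm,
    ofReal_mul_recip_self (add_pos hV hd), mul_one]

lemma setLIntegral_mul_rsqrt_mul_recip_mul_recip {a b : ℝ} (ha : 0 < a) (hb : 0 < b) :
    ∫⁻ V in Ioi 0, ENNReal.ofReal V * (rsqrt V * recip (V + a ^ 2) * recip (V + b ^ 2))
      = ENNReal.ofReal (a * b)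
        * ∫⁻ V in Ioi 0, rsqrt V * recip (V + a ^ 2) * recip (V + b ^ 2) := by
  rw [setLIntegral_Ioi_comp_div (r := a ^ 2 * b ^ 2) (by positivity),
    ← lintegral_const_mul' _ _ ENNReal.ofReal_ne_top]
  refine setLIntegral_congr_fun measurableSet_Ioi fun k (hk : 0 < k) => ?_
  obtain ⟨t, ht, rfl⟩ : ∃ t, 0 < t ∧ t ^ 2 = k := ⟨√k, Real.sqrt_pos.mpr hk, Real.sq_sqrt hk.le⟩
  have hsq : a ^ 2 * b ^ 2 / t ^ 2 = (a * b / t) ^ 2 := by ring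
  have hrecip {x y : ℝ} (hx : 0 < x) : recip ((x * y / t) ^ 2 + x ^ 2)
      = ENNReal.ofReal (t ^ 2 / x ^ 2) * recip (t ^ 2 + y ^ 2) := by
    rw [ofReal_mul_recip (by positivity), recip]
    congr 1
    field_simp
    ring
  have hcoeff : ENNReal.ofReal ((a * b / t) ^ 2 / t ^ 2) * ENNReal.ofReal ((a * b / t) ^ 2) *
      recip (a * b / t) * ENNReal.ofReal (t ^ 2 / a ^ 2) * ENNReal.ofReal (t ^ 2 / b ^ 2)
        = ENNReal.ofReal (a * b) * recip t := by
    simp (disch := positivity) only [recip, ← ENNReal.ofReal_mul]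
    congr 1
    field_simp
  have hdiv : a ^ 2 * b ^ 2 / (t ^ 2) ^ 2 = (a * b / t) ^ 2 / t ^ 2 := by ring
  rw [hdiv, hsq, rsqrt_sq (by positivity), rsqrt_sq ht.le, hrecip ha, mul_comm a, hrecip hb,
    mul_comm b]
  calc _ = ENNReal.ofReal ((a * b / t) ^ 2 / t ^ 2) * ENNReal.ofReal ((a * b / t) ^ 2) *
        recip (a * b / t) * ENNReal.ofReal (t ^ 2 / a ^ 2) * ENNReal.ofReal (t ^ 2 / b ^ 2) *
          (recip (t ^ 2 + b ^ 2) * recip (t ^ 2 + a ^ 2)) := by ring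
    _ = _ := by rw [hcoeff]; ring

lemma setLIntegral_rsqrt_mul_recip_mul_recip {a b : ℝ} (ha : 0 < a) (hb : 0 < b) :
    ∫⁻ V in Ioi 0, rsqrt V * recip (V + a ^ 2) * recip (V + b ^ 2)
      = ENNReal.ofReal (π / (a * b * (a + b))) := by
  have hsingle := setLIntegral_Ioi_rsqrt_mul_recip (a := a ^ 2) (b := 1) (by positivity) one_pos
  simp only [mul_one, one_mul, add_comm (a ^ 2), rsqrt_sq ha.le,
    ofReal_mul_recip pi_pos.le] at hsingle
  have hsum := setLIntegral_mul_recip_add (F := fun V => rsqrt V * recip (V + a ^ 2))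
    (by fun_prop) (pow_pos hb 2)
  rw [hsingle, setLIntegral_mul_rsqrt_mul_recip_mul_recip ha hb, ← add_mul,
    ← ENNReal.ofReal_add (by positivity) (by positivity),
    ← ENNReal.eq_div_iff (ENNReal.ofReal_pos.mpr (by positivity)).ne' ENNReal.ofReal_ne_top,
    ← ENNReal.ofReal_div_of_pos (by positivity)] at hsum
  rw [hsum]
  congr 1
  field_simp

lemma add_add_mul_eq_mul_of_add_sq_mul_eq {a b c i j : ℝ} (ha : 0 < a) (hb : 0 < b) (hc : 0 < c)
    (hac : a ≠ c) (hc_eq : j + c ^ 2 * i = π / (a * b * (a + b)))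
    (ha_eq : j + a ^ 2 * i = π / (b * c * (b + c))) :
    (a + b + c) * j = a * b * c * i := by
  have hne : (a - c) * (a + c) ≠ 0 := mul_ne_zero (sub_ne_zero.mpr hac) (by positivity)
  have hi : i = π * (a + b + c) / (a * b * c * (a + b) * (b + c) * (c + a)) := by
    apply mul_left_cancel₀ hne
    calc (a - c) * (a + c) * i = π / (b * c * (b + c)) - π / (a * b * (a + b)) := by
          linear_combination ha_eq - hc_eq
      _ = _ := by field_simp; ring
  rw [eq_sub_of_add_eq hc_eq, hi]
  field_simp
  ring

lemma setLIntegral_rsqrt_mul_recip_mul_recip_mul_recip {a b c : ℝ} (ha : 0 < a) (hb : 0 < b)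
    (hc : 0 < c) (hac : a ≠ c) :
    ENNReal.ofReal (a + b + c) * ∫⁻ V in Ioi 0, ENNReal.ofReal V *
        (rsqrt V * recip (V + a ^ 2) * recip (V + b ^ 2) * recip (V + c ^ 2))
      = ENNReal.ofReal (a * b * c) * ∫⁻ V in Ioi 0,
        rsqrt V * recip (V + a ^ 2) * recip (V + b ^ 2) * recip (V + c ^ 2) := by
  have hc_eq := setLIntegral_mul_recip_add
    (F := fun V => rsqrt V * recip (V + a ^ 2) * recip (V + b ^ 2)) (by fun_prop) (pow_pos hc 2)
  have ha_eq := setLIntegral_mul_recip_add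
    (F := fun V => rsqrt V * recip (V + b ^ 2) * recip (V + c ^ 2)) (by fun_prop) (pow_pos ha 2)
  have hperm (V : ℝ) : rsqrt V * recip (V + b ^ 2) * recip (V + c ^ 2) * recip (V + a ^ 2)
      = rsqrt V * recip (V + a ^ 2) * recip (V + b ^ 2) * recip (V + c ^ 2) := by ring
  simp only [hperm] at ha_eq
  rw [setLIntegral_rsqrt_mul_recip_mul_recip ha hb] at hc_eq
  rw [setLIntegral_rsqrt_mul_recip_mul_recip hb hc] at ha_eq
  set I := ∫⁻ V in Ioi 0, rsqrt V * recip (V + a ^ 2) * recip (V + b ^ 2) * recip (V + c ^ 2)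
  set J := ∫⁻ V in Ioi 0, ENNReal.ofReal V *
    (rsqrt V * recip (V + a ^ 2) * recip (V + b ^ 2) * recip (V + c ^ 2))
  obtain ⟨hJ, hIc⟩ := ENNReal.add_ne_top.mp (hc_eq.trans_ne ENNReal.ofReal_ne_top)
  have hI : I ≠ ∞ := fun h =>
    hIc <| h ▸ ENNReal.mul_top (ENNReal.ofReal_pos.mpr (pow_pos hc 2)).ne'
  obtain ⟨i, hi, hIi⟩ : ∃ i, 0 ≤ i ∧ I = ENNReal.ofReal i :=
    ⟨_, ENNReal.toReal_nonneg, (ENNReal.ofReal_toReal hI).symm⟩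
  obtain ⟨j, hj, hJj⟩ : ∃ j, 0 ≤ j ∧ J = ENNReal.ofReal j :=
    ⟨_, ENNReal.toReal_nonneg, (ENNReal.ofReal_toReal hJ).symm⟩
  rw [hIi, hJj, ← ENNReal.ofReal_mul (by positivity), ← ENNReal.ofReal_add hj (by positivity),
    ENNReal.ofReal_eq_ofReal_iff (by positivity) (by positivity)] at hc_eq ha_eq
  rw [hIi, hJj, ← ENNReal.ofReal_mul (by positivity), ← ENNReal.ofReal_mul (by positivity),
    add_add_mul_eq_mul_of_add_sq_mul_eq ha hb hc hac hc_eq ha_eq]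

/-- With `s = √V`, the difference of the two integrands is `V` times the imaginary part of
`∏ⱼ 1 / (s (s - i √aⱼ))`, and `∫ ds / ∏ⱼ (s - i √aⱼ)` over the real line vanishes because all poles
lie in the upper half-plane. -/
lemma setLIntegral_stieltjesKernel_triple {a b c : ℝ} (ha : 0 < a) (hb : 0 < b) (hc : 0 < c)
    (hac : a ≠ c) :
    ∫⁻ V in Ioi 0, ENNReal.ofReal V *
        (stieltjesKernel a V * stieltjesKernel b V * conjStieltjesKernel c V
          + (stieltjesKernel a V * conjStieltjesKernel b V * stieltjesKernel c V
            + conjStieltjesKernel a V * stieltjesKernel b V * stieltjesKernel c V))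
      = ∫⁻ V in Ioi 0, ENNReal.ofReal V *
        (conjStieltjesKernel a V * conjStieltjesKernel b V * conjStieltjesKernel c V) := by
  have htriple := setLIntegral_rsqrt_mul_recip_mul_recip_mul_recip (a := √a) (b := √b) (c := √c)
    (by positivity) (by positivity) (by positivity)
    (fun h => hac ((Real.sqrt_inj ha.le hc.le).mp h))
  simp only [Real.sq_sqrt ha.le, Real.sq_sqrt hb.le, Real.sq_sqrt hc.le,
    ← lintegral_const_mul' _ _ ENNReal.ofReal_ne_top] at htriple
  convert htriple using 1
  · refine lintegral_congr fun V => ?_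
    rw [ENNReal.ofReal_add (by positivity) (by positivity),
      ENNReal.ofReal_add (by positivity) (by positivity)]
    unfold stieltjesKernel conjStieltjesKernel
    ring
  · refine setLIntegral_congr_fun measurableSet_Ioi fun V (hV : 0 < V) => ?_
    have hcancel : ENNReal.ofReal V * (rsqrt V * rsqrt V) = 1 := by
      rw [rsqrt_mul_self hV.le, ofReal_mul_recip_self hV]
    rw [ENNReal.ofReal_mul (by positivity), ENNReal.ofReal_mul (by positivity)]
    unfold conjStieltjesKernel
    calc _ = ENNReal.ofReal V * (rsqrt V * rsqrt V) *
          (ENNReal.ofReal √a * ENNReal.ofReal √b * ENNReal.ofReal √c *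
            (rsqrt V * recip (V + a) * recip (V + b) * recip (V + c))) := by ring
      _ = _ := by rw [hcancel, one_mul]

lemma stieltjesKernel_mul {m : ℝ} (hm : 0 < m) (a V : ℝ) :
    stieltjesKernel a (m * V) = recip m * stieltjesKernel (a / m) V := by
  rw [stieltjesKernel, stieltjesKernel, ← recip_mul hm.le, mul_add, mul_div_cancel₀ a hm.ne']

lemma conjStieltjesKernel_mul {m : ℝ} (hm : 0 < m) (a V : ℝ) :
    conjStieltjesKernel a (m * V) = recip m * conjStieltjesKernel (a / m) V := by
  have hrecip : recip (m * V + a) = recip m * recip (V + a / m) := stieltjesKernel_mul hm a V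
  have hsqrt : ENNReal.ofReal √(a / m) = ENNReal.ofReal √a * rsqrt m := by
    rw [Real.sqrt_div' a hm.le, ← ofReal_mul_recip (Real.sqrt_nonneg a)]
    rfl
  rw [conjStieltjesKernel, conjStieltjesKernel, hrecip, hsqrt, rsqrt_mul_of_nonneg_left hm.le]
  ring

lemma setLIntegral_stieltjesKernel_triple_ray {m n a b c : ℝ} (hm : 0 < m) (hn : 0 < n)
    (ha : 0 < a) (hb : 0 < b) (hc : 0 < c) (hne : c ≠ a / m) :
    ∫⁻ V in Ioi 0, ENNReal.ofReal V *
        (stieltjesKernel a (m * V) * stieltjesKernel b (n * V) * conjStieltjesKernel c V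
          + (stieltjesKernel a (m * V) * conjStieltjesKernel b (n * V) * stieltjesKernel c V
            + conjStieltjesKernel a (m * V) * stieltjesKernel b (n * V) * stieltjesKernel c V))
      = ∫⁻ V in Ioi 0, ENNReal.ofReal V * (conjStieltjesKernel a (m * V) *
        conjStieltjesKernel b (n * V) * conjStieltjesKernel c V) := by
  have hmn : recip m * recip n ≠ ∞ := ENNReal.mul_ne_top (recip_ne_top m) (recip_ne_top n)
  have htriple := congrArg (recip m * recip n * ·) <|
    setLIntegral_stieltjesKernel_triple (div_pos ha hm) (div_pos hb hn) hc hne.symm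
  simp only [← lintegral_const_mul' _ _ hmn] at htriple
  simp only [stieltjesKernel_mul hm, stieltjesKernel_mul hn, conjStieltjesKernel_mul hm,
    conjStieltjesKernel_mul hn]
  convert htriple using 3 <;> ring

section ThreeTerm

variable {w : ℝ → ℝ≥0∞}

lemma conjStieltjesTransform_mul₃ (hw : Measurable w) (X Y V : ℝ) :
    conjStieltjesTransform w X * conjStieltjesTransform w Y * conjStieltjesTransform w V
      = ∫⁻ a, ∫⁻ b, ∫⁻ c, w a * w b * w c *
        (conjStieltjesKernel a X * conjStieltjesKernel b Y * conjStieltjesKernel c V)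
        ∂halfLineMeasure ∂halfLineMeasure ∂halfLineMeasure := by
  simp only [conjStieltjesTransform]
  rw [lintegral_mul_lintegral_mul_lintegral (by fun_prop) (by fun_prop) (by fun_prop)]
  refine lintegral_congr fun a => lintegral_congr fun b => lintegral_congr fun c => ?_
  ring

lemma stieltjesTransform_mul₃_sum (hw : Measurable w) (X Y V : ℝ) :
    stieltjesTransform w X * stieltjesTransform w Y * conjStieltjesTransform w V
        + (stieltjesTransform w X * conjStieltjesTransform w Y * stieltjesTransform w V
          + conjStieltjesTransform w X * stieltjesTransform w Y * stieltjesTransform w V)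
      = ∫⁻ a, ∫⁻ b, ∫⁻ c, w a * w b * w c *
        (stieltjesKernel a X * stieltjesKernel b Y * conjStieltjesKernel c V
          + (stieltjesKernel a X * conjStieltjesKernel b Y * stieltjesKernel c V
            + conjStieltjesKernel a X * stieltjesKernel b Y * stieltjesKernel c V))
        ∂halfLineMeasure ∂halfLineMeasure ∂halfLineMeasure := by
  simp only [stieltjesTransform, conjStieltjesTransform]
  rw [lintegral_mul_lintegral_mul_lintegral (by fun_prop) (by fun_prop) (by fun_prop),
    lintegral_mul_lintegral_mul_lintegral (by fun_prop) (by fun_prop) (by fun_prop),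
    lintegral_mul_lintegral_mul_lintegral (by fun_prop) (by fun_prop) (by fun_prop),
    ← lintegral_lintegral_lintegral_add (by fun_prop),
    ← lintegral_lintegral_lintegral_add (by fun_prop)]
  refine lintegral_congr fun a => lintegral_congr fun b => lintegral_congr fun c => ?_
  ring

lemma setLIntegral_stieltjesTransform_ray (hw : Measurable w) (hw_top : ∀ a, w a ≠ ∞) {m n : ℝ}
    (hm : 0 < m) (hn : 0 < n) :
    ∫⁻ V in Ioi 0, ENNReal.ofReal V *
        (stieltjesTransform w (m * V) * stieltjesTransform w (n * V) * conjStieltjesTransform w V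
          + (stieltjesTransform w (m * V) * conjStieltjesTransform w (n * V)
              * stieltjesTransform w V
            + conjStieltjesTransform w (m * V) * stieltjesTransform w (n * V)
              * stieltjesTransform w V))
      = ∫⁻ V in Ioi 0, ENNReal.ofReal V * (conjStieltjesTransform w (m * V) *
        conjStieltjesTransform w (n * V) * conjStieltjesTransform w V) := by
  simp only [stieltjesTransform_mul₃_sum hw, conjStieltjesTransform_mul₃ hw,
    ← lintegral_const_mul' _ _ ENNReal.ofReal_ne_top,
    mul_left_comm (ENNReal.ofReal _) (w _ * w _ * w _)]
  refine (lintegral_rotate₄ (by fun_prop)).trans (.trans ?_ (lintegral_rotate₄ (by fun_prop)).symm)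
  refine setLIntegral_congr_fun measurableSet_Ioi fun a ha =>
    setLIntegral_congr_fun measurableSet_Ioi fun b hb => lintegral_congr_ae ?_
  have hne : ∀ᵐ c ∂halfLineMeasure, c ≠ a / m := ae_restrict_of_ae (by simp [ae_iff])
  filter_upwards [hne, ae_restrict_mem measurableSet_Ioi] with c hc_ne hc
  have htop : w a * w b * w c ≠ ∞ :=
    ENNReal.mul_ne_top (ENNReal.mul_ne_top (hw_top a) (hw_top b)) (hw_top c)
  rw [lintegral_const_mul' _ _ htop, lintegral_const_mul' _ _ htop,
    setLIntegral_stieltjesKernel_triple_ray hm hn ha hb hc hc_ne]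

lemma three_mul_kallenIntegral (hw : Measurable w) (hw_top : ∀ a, w a ≠ ∞) :
    3 * kallenIntegral (fun X Y V =>
        stieltjesTransform w X * stieltjesTransform w Y * conjStieltjesTransform w V)
      = kallenIntegral (fun X Y V =>
        conjStieltjesTransform w X * conjStieltjesTransform w Y * conjStieltjesTransform w V) := by
  set S := stieltjesTransform w
  set C := conjStieltjesTransform w
  have hS : Measurable S := measurable_stieltjesTransform hw
  have hC : Measurable C := measurable_conjStieltjesTransform hw
  have hCSS : kallenIntegral (fun X Y V => C X * S Y * S V)
      = kallenIntegral fun X Y V => S X * S Y * C V := by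
    rw [← kallenIntegral_swap_outer (by fun_prop)]
    exact congrArg kallenIntegral (by ext X Y V; ring)
  have hSCS : kallenIntegral (fun X Y V => S X * C Y * S V)
      = kallenIntegral fun X Y V => S X * S Y * C V := by
    rw [← hCSS, ← kallenIntegral_swap_left (by fun_prop)]
    exact congrArg kallenIntegral (by ext X Y V; ring)
  calc 3 * kallenIntegral (fun X Y V => S X * S Y * C V)
    _ = kallenIntegral fun X Y V => S X * S Y * C V + (S X * C Y * S V + C X * S Y * S V) := by
      rw [kallenIntegral_add (by fun_prop), kallenIntegral_add (by fun_prop), hSCS, hCSS]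
      ring
    _ = kallenIntegral fun X Y V => C X * C Y * C V :=
      kallenIntegral_congr_of_rays (by fun_prop) (by fun_prop) fun m n hm hn =>
        setLIntegral_stieltjesTransform_ray hw hw_top hm hn

end ThreeTerm

/-! ### Comparison of the two integrals -/

lemma three_mul_sunriseIntegral : 3 * sunriseIntegral = 4 * watsonIntegral := by
  have hpi_sq : ENNReal.ofReal (π ^ 2) ≠ 0 := (ENNReal.ofReal_pos.mpr (by positivity)).ne'
  have hpi_cube : ENNReal.ofReal (π ^ 3) = ENNReal.ofReal (π ^ 2) * ENNReal.ofReal π := by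
    rw [← ENNReal.ofReal_mul (by positivity), pow_succ]
  have hthree := three_mul_kallenIntegral measurable_outerWeight outerWeight_ne_top
  rw [kallenIntegral_eq_sunriseIntegral, kallenIntegral_eq_posKallenIntegral,
    posKallenIntegral_eq_two_mul_unitKallenIntegral, hpi_cube, mul_left_comm, mul_assoc,
    ENNReal.mul_right_inj hpi_sq ENNReal.ofReal_ne_top] at hthree
  have hwatson : 4 * (3 * sunriseIntegral) = 4 * (4 * watsonIntegral) :=
    calc 4 * (3 * sunriseIntegral)
      _ = ENNReal.ofReal (8 * π) * unitKallenIntegral := by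
        rw [hthree, ENNReal.ofReal_mul (by norm_num), ENNReal.ofReal_ofNat]
        ring
      _ = 4 * (4 * watsonIntegral) := by
        rw [← watsonIntegral_eq_unitKallenIntegral]
        ring
  exact (ENNReal.mul_right_inj (by norm_num) (by norm_num)).mp hwatson

lemma sunriseIntegral_ne_top : sunriseIntegral ≠ ∞ := fun h => by
  have h4 : 4 * watsonIntegral ≠ ∞ := ENNReal.mul_ne_top (by norm_num) watsonIntegral_ne_top
  exact h4 (by rw [← three_mul_sunriseIntegral, h, ENNReal.mul_top (by norm_num)])

lemma sunriseIntegral_toReal : sunriseIntegral.toReal = 4 / 3 * watsonIntegral.toReal := by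
  have h := congrArg ENNReal.toReal three_mul_sunriseIntegral
  simp only [ENNReal.toReal_mul, ENNReal.toReal_ofNat] at h
  linarith

lemma integral_sunrise_eq_toReal :
    ∫ x₁ in Ioi (0 : ℝ), ∫ x₂ in Ioi (0 : ℝ), ∫ x₃ in Ioi (0 : ℝ), ∫ x₄ in Ioi (0 : ℝ),
      1 / (x₁ * x₂ * x₃ * x₄ *
        ((1 + (x₁ + x₂ + x₃ + x₄)) * (1 + (1 / x₁ + 1 / x₂ + 1 / x₃ + 1 / x₄)) - 1))
      = sunriseIntegral.toReal := by
  refine setIntegral₄_eq_toReal_setLIntegral₄ measurableSet_Ioi (by fun_prop) ?_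
    sunriseIntegral_ne_top
  intro x₁ (h₁ : 0 < x₁) x₂ (h₂ : 0 < x₂) x₃ (h₃ : 0 < x₃) x₄ (h₄ : 0 < x₄)
  have hfactor : (1 + (x₁ + x₂ + x₃ + x₄)) * (1 + (1 / x₁ + 1 / x₂ + 1 / x₃ + 1 / x₄)) - 1
      = (x₁ + x₂ + x₃ + x₄)
        + (1 + (x₁ + x₂ + x₃ + x₄)) * (1 / x₁ + 1 / x₂ + 1 / x₃ + 1 / x₄) := by ring
  rw [hfactor]
  positivity

end SunriseWatson

theorem sunrise_eq_watson :
    (∫ x1 in Ioi (0:ℝ), ∫ x2 in Ioi (0:ℝ), ∫ x3 in Ioi (0:ℝ), ∫ x4 in Ioi (0:ℝ),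
      1 / (x1 * x2 * x3 * x4 *
        ((1 + (x1 + x2 + x3 + x4)) * (1 + (1/x1 + 1/x2 + 1/x3 + 1/x4)) - 1)))
    = (4/3) * ∫ p1 in (0:ℝ)..π, ∫ p2 in (0:ℝ)..π, ∫ p3 in (0:ℝ)..π, ∫ p4 in (0:ℝ)..π,
        1 / (4 - cos p1 - cos p2 - cos p3 - cos p4) := by
  rw [SunriseWatson.integral_sunrise_eq_toReal, SunriseWatson.integral_watson_eq_toReal,
    SunriseWatson.sunriseIntegral_toReal]
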